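/- arXiv:0811.3072 — 3 statements merged into one kernel-verified Lean document; each statement's English description precedes it below -/
import Mathlib

section
/- There exists a *-homomorphism W̃ from S_η(O_N) into the bounded operators on H̃ such that: (i) W̃((P_{N^n}S_rP_{N^n})_{n≥0}) = Σ_{N−1−r} for every r ∈ Ω; (ii) the kernel of W̃ is exactly G_η (note G_η ⊆ S_η(O_N)); and (iii) the range of W̃ is T_N. -/
set_option synthInstance.maxHeartbeats 1000000
set_option maxHeartbeats 1000000

/-- The restricted finite sections algebra `S_η(O_N)`: the smallest closed *-subalgebra of
`F_η` (bounded sequences, with `n`-th entry an operator supported on the range of `P (N^n)`,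
i.e. an `N^n × N^n` matrix) containing all sequences `(P_{N^n} A P_{N^n})_{n ≥ 0}` with `A`
in the concrete Cuntz algebra `O_N` (the smallest closed *-subalgebra of the bounded
operators containing `S 0, …, S (N-1)`). -/
noncomputable def Seta {H : Type*} [NormedAddCommGroup H] [InnerProductSpace ℂ H]
    [CompleteSpace H] {N : ℕ} (S : Fin N → H →L[ℂ] H) (P : ℕ → H →L[ℂ] H) :
    NonUnitalStarSubalgebra ℂ (BoundedContinuousFunction ℕ (H →L[ℂ] H)) :=
  (NonUnitalStarAlgebra.adjoin ℂ
    {g : BoundedContinuousFunction ℕ (H →L[ℂ] H) |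
      ∃ A ∈ (NonUnitalStarAlgebra.adjoin ℂ (Set.range S)).topologicalClosure,
        ∀ n : ℕ, g n = P (N ^ n) * A * P (N ^ n)}).topologicalClosure

section Abs
open Filter Topology BoundedContinuousFunction

set_option linter.unusedSectionVars false
variable {H : Type*} [NormedAddCommGroup H] [InnerProductSpace ℂ H]
    [CompleteSpace H] {H2 : Type*} [NormedAddCommGroup H2] [InnerProductSpace ℂ H2]
    [CompleteSpace H2]

def XAsy (A : ℕ → H →L[ℂ] H2) (C : ℕ → H →L[ℂ] H) (x : ℕ →ᵇ (H →L[ℂ] H)) (T : H2 →L[ℂ] H2) :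
    Prop :=
  Tendsto (fun n => (T ∘L A n - A n ∘L x n) ∘L C n) atTop (𝓝 0)

def XCom (C : ℕ → H →L[ℂ] H) (x : ℕ →ᵇ (H →L[ℂ] H)) : Prop :=
  Tendsto (fun n => x n ∘L C n - C n ∘L x n) atTop (𝓝 0)

lemma xtend_left {E F G : Type*} [NormedAddCommGroup E] [NormedSpace ℂ E]
    [NormedAddCommGroup F] [NormedSpace ℂ F] [NormedAddCommGroup G] [NormedSpace ℂ G]
    (u : ℕ → F →L[ℂ] G) (v : ℕ → E →L[ℂ] F) (K : ℝ) (hu : ∀ n, ‖u n‖ ≤ K)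
    (hv : Tendsto v atTop (𝓝 0)) : Tendsto (fun n => u n ∘L v n) atTop (𝓝 0) := by
  refine squeeze_zero_norm (a := fun n => K * ‖v n‖) (fun n => ?_) ?_
  · exact (ContinuousLinearMap.opNorm_comp_le _ _).trans
      (mul_le_mul_of_nonneg_right (hu n) (norm_nonneg _))
  · simpa using hv.norm.const_mul K

lemma xtend_right {E F G : Type*} [NormedAddCommGroup E] [NormedSpace ℂ E]
    [NormedAddCommGroup F] [NormedSpace ℂ F] [NormedAddCommGroup G] [NormedSpace ℂ G]
    (u : ℕ → F →L[ℂ] G) (v : ℕ → E →L[ℂ] F) (K : ℝ) (hv : ∀ n, ‖v n‖ ≤ K)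
    (hu : Tendsto u atTop (𝓝 0)) : Tendsto (fun n => u n ∘L v n) atTop (𝓝 0) := by
  refine squeeze_zero_norm (a := fun n => ‖u n‖ * K) (fun n => ?_) ?_
  · exact (ContinuousLinearMap.opNorm_comp_le _ _).trans
      (mul_le_mul_of_nonneg_left (hv n) (norm_nonneg _))
  · simpa using hu.norm.mul_const K

lemma XAsy.add {A : ℕ → H →L[ℂ] H2} {C : ℕ → H →L[ℂ] H} {x y : ℕ →ᵇ (H →L[ℂ] H)}
    {T U : H2 →L[ℂ] H2} (h : XAsy A C x T) (h' : XAsy A C y U) : XAsy A C (x + y) (T + U) := by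
  have := Tendsto.add h h'
  rw [add_zero] at this
  refine this.congr fun n => ?_
  ext z; simp; abel

lemma XAsy.smul {A : ℕ → H →L[ℂ] H2} {C : ℕ → H →L[ℂ] H} {x : ℕ →ᵇ (H →L[ℂ] H)}
    {T : H2 →L[ℂ] H2} (c : ℂ) (h : XAsy A C x T) : XAsy A C (c • x) (c • T) := by
  have := Tendsto.const_smul h c
  rw [smul_zero] at this
  refine this.congr fun n => ?_
  ext z; simp [smul_sub]

lemma XCom.add {C : ℕ → H →L[ℂ] H} {x y : ℕ →ᵇ (H →L[ℂ] H)}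
    (h : XCom C x) (h' : XCom C y) : XCom C (x + y) := by
  have := Tendsto.add h h'
  rw [add_zero] at this
  refine this.congr fun n => ?_
  ext z; simp; abel

lemma XCom.smul {C : ℕ → H →L[ℂ] H} {x : ℕ →ᵇ (H →L[ℂ] H)}
    (c : ℂ) (h : XCom C x) : XCom C (c • x) := by
  have := Tendsto.const_smul h c
  rw [smul_zero] at this
  refine this.congr fun n => ?_
  ext z; simp [smul_sub]

lemma XCom.mul {C : ℕ → H →L[ℂ] H} {x y : ℕ →ᵇ (H →L[ℂ] H)}
    (h : XCom C x) (h' : XCom C y) : XCom C (x * y) := by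
  have := (xtend_left (fun n => x n) _ ‖x‖ x.norm_coe_le_norm h').add
    (xtend_right _ (fun n => y n) ‖y‖ y.norm_coe_le_norm h)
  rw [add_zero] at this
  refine this.congr fun n => ?_
  ext z; simp

lemma XCom.star {C : ℕ → H →L[ℂ] H} (hC : ∀ n, star (C n) = C n) {x : ℕ →ᵇ (H →L[ℂ] H)}
    (h : XCom C x) : XCom C (star x) := by
  have := (Tendsto.star h).neg
  rw [star_zero, neg_zero] at this
  refine this.congr fun n => ?_
  change -Star.star (x n * C n - C n * x n) = Star.star (x n) * C n - C n * Star.star (x n)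
  simp [hC]

lemma XAsy.mul {A : ℕ → H →L[ℂ] H2} {C : ℕ → H →L[ℂ] H} (hA : ∀ n, ‖A n‖ ≤ 1)
    {x y : ℕ →ᵇ (H →L[ℂ] H)}
    {T U : H2 →L[ℂ] H2} (h : XAsy A C x T) (h' : XAsy A C y U) (hy : XCom C y) :
    XAsy A C (x * y) (T * U) := by
  have h1 := xtend_left (fun _ => T) _ ‖T‖ (fun _ => le_rfl) h'
  have h2 := xtend_right _ (fun n => y n) ‖y‖ y.norm_coe_le_norm h
  have h3 := xtend_left (fun n => T ∘L A n - A n ∘L x n) _ (‖T‖ * 1 + 1 * ‖x‖) (fun n => by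
    refine (norm_sub_le _ _).trans (add_le_add ?_ ?_)
    · exact (ContinuousLinearMap.opNorm_comp_le _ _).trans (by gcongr; exact hA n)
    · exact (ContinuousLinearMap.opNorm_comp_le _ _).trans
        (by gcongr; exact hA n; exact x.norm_coe_le_norm n)) hy
  have := (h1.add h2).add h3
  rw [add_zero, add_zero] at this
  refine this.congr fun n => ?_
  ext z; simp

/-- closedness criterion -/
lemma xclosed {E F : Type*} [NormedAddCommGroup E] [NormedAddCommGroup F] (L : ℕ → E → F) (K : ℝ)
    (hL : ∀ n p q, ‖L n p - L n q‖ ≤ K * ‖p - q‖) :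
    IsClosed {p | Tendsto (fun n => L n p) atTop (𝓝 0)} := by
  refine isClosed_of_closure_subset fun p hp => ?_
  rw [Set.mem_ofPred_eq, tendsto_zero_iff_norm_tendsto_zero, Metric.tendsto_atTop]
  intro ε hε
  have hK : 0 < |K| + 1 := by positivity
  obtain ⟨q, hq, hpq⟩ := Metric.mem_closure_iff.1 hp (ε / 2 / (|K| + 1)) (by positivity)
  rw [Set.mem_ofPred_eq, tendsto_zero_iff_norm_tendsto_zero, Metric.tendsto_atTop] at hq
  obtain ⟨n0, hn0⟩ := hq (ε / 2) (by positivity)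
  refine ⟨n0, fun n hn => ?_⟩
  have h1 := hn0 n hn
  simp only [dist_zero_right, norm_norm] at h1 ⊢
  rw [dist_eq_norm, lt_div_iff₀ hK] at hpq
  have h2 := hL n p q
  have h3 : K * ‖p - q‖ ≤ ‖p - q‖ * (|K| + 1) := by
    have := le_abs_self K
    nlinarith [norm_nonneg (p - q)]
  have h4 := norm_sub_norm_le (L n p) (L n q)
  linarith

lemma xclosed_asy {A : ℕ → H →L[ℂ] H2} {C : ℕ → H →L[ℂ] H} (hA : ∀ n, ‖A n‖ ≤ 1)
    (hC : ∀ n, ‖C n‖ ≤ 1) :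
    IsClosed {p : (ℕ →ᵇ (H →L[ℂ] H)) × (H2 →L[ℂ] H2) | XAsy A C p.1 p.2} := by
  refine xclosed (E := (ℕ →ᵇ (H →L[ℂ] H)) × (H2 →L[ℂ] H2)) (F := H →L[ℂ] H2)
    (fun n p => (p.2 ∘L A n - A n ∘L p.1 n) ∘L C n) 2 ?_
  intro n p q
  have : (p.2 ∘L A n - A n ∘L p.1 n) ∘L C n - (q.2 ∘L A n - A n ∘L q.1 n) ∘L C n
      = ((p - q).2 ∘L A n - A n ∘L (p - q).1 n) ∘L C n := by
    ext z; simp only [_root_.sub_apply, ContinuousLinearMap.comp_apply, Prod.fst_sub, Prod.snd_sub, BoundedContinuousFunction.sub_apply, map_sub]; abel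
  rw [this]
  refine (ContinuousLinearMap.opNorm_comp_le _ _).trans ?_
  refine (mul_le_mul_of_nonneg_left (hC n) (norm_nonneg _)).trans ?_
  rw [mul_one, two_mul]
  refine (norm_sub_le _ _).trans (add_le_add ?_ ?_)
  · refine (ContinuousLinearMap.opNorm_comp_le _ _).trans ?_
    exact (mul_le_mul_of_nonneg_left (hA n) (norm_nonneg _)).trans (by
      rw [mul_one]; exact norm_snd_le _)
  · refine (ContinuousLinearMap.opNorm_comp_le _ _).trans ?_
    exact (mul_le_mul_of_nonneg_right (hA n) (norm_nonneg _)).trans (by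
      rw [one_mul]; exact ((p - q).1.norm_coe_le_norm n).trans (norm_fst_le _))

lemma xclosed_com {C : ℕ → H →L[ℂ] H} (hC : ∀ n, ‖C n‖ ≤ 1) :
    IsClosed {x : (ℕ →ᵇ (H →L[ℂ] H)) | XCom C x} := by
  refine xclosed (E := (ℕ →ᵇ (H →L[ℂ] H))) (F := H →L[ℂ] H)
    (fun n x => x n ∘L C n - C n ∘L x n) 2 ?_
  intro n p q
  have : p n ∘L C n - C n ∘L p n - (q n ∘L C n - C n ∘L q n)
      = (p - q) n ∘L C n - C n ∘L (p - q) n := by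
    ext z; simp; abel
  rw [this, two_mul]
  refine (norm_sub_le _ _).trans (add_le_add ?_ ?_)
  · refine (ContinuousLinearMap.opNorm_comp_le _ _).trans ?_
    exact (mul_le_mul_of_nonneg_left (hC n) (norm_nonneg _)).trans (by
      rw [mul_one]; exact (p - q).norm_coe_le_norm n)
  · refine (ContinuousLinearMap.opNorm_comp_le _ _).trans ?_
    exact (mul_le_mul_of_nonneg_right (hC n) (norm_nonneg _)).trans (by
      rw [one_mul]; exact (p - q).norm_coe_le_norm n)

structure XDat (H : Type*) [NormedAddCommGroup H] [InnerProductSpace ℂ H]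
    [CompleteSpace H] (H2 : Type*) [NormedAddCommGroup H2] [InnerProductSpace ℂ H2]
    [CompleteSpace H2] where
  A : ℕ → H →L[ℂ] H2
  B : ℕ → H →L[ℂ] H2
  C : ℕ → H →L[ℂ] H
  D : ℕ → H →L[ℂ] H
  P : ℕ → H →L[ℂ] H
  hA : ∀ n, ‖A n‖ ≤ 1
  hB : ∀ n, ‖B n‖ ≤ 1
  hC : ∀ n, ‖C n‖ ≤ 1
  hD : ∀ n, ‖D n‖ ≤ 1
  hCs : ∀ n, star (C n) = C n
  hDs : ∀ n, star (D n) = D n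
  hPs : ∀ n, star (P n) = P n
  hAA : ∀ n, (A n).adjoint ∘L A n = P n
  hBB : ∀ n, (B n).adjoint ∘L B n = P n
  hCD : ∀ n, C n + D n = P n
  hK : ∀ z, Tendsto (fun n => A n (C n ((A n).adjoint z))) atTop (𝓝 z)

structure XR (d : XDat H H2) (x : ℕ →ᵇ (H →L[ℂ] H)) (T : H2 →L[ℂ] H2) : Prop where
  px : ∀ n, d.P n * x n = x n
  xp : ∀ n, x n * d.P n = x n
  a : XAsy d.A d.C x T
  b : XAsy d.B d.D x T
  c : XCom d.C x
  e : XCom d.D x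

def XRel (d : XDat H H2) (x : ℕ →ᵇ (H →L[ℂ] H)) (T : H2 →L[ℂ] H2) : Prop :=
  XR d x T ∧ XR d (star x) (star T)

variable {d : XDat H H2} {x y : ℕ →ᵇ (H →L[ℂ] H)} {T U : H2 →L[ℂ] H2}

lemma XR.add (h : XR d x T) (h' : XR d y U) : XR d (x + y) (T + U) where
  px n := by simp [mul_add, h.px, h'.px]
  xp n := by simp [add_mul, h.xp, h'.xp]
  a := h.a.add h'.a
  b := h.b.add h'.b
  c := h.c.add h'.c
  e := h.e.add h'.e

lemma XR.smul (c : ℂ) (h : XR d x T) : XR d (c • x) (c • T) where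
  px n := by simp [h.px]
  xp n := by simp [h.xp]
  a := h.a.smul c
  b := h.b.smul c
  c := h.c.smul c
  e := h.e.smul c

lemma XR.mul (h : XR d x T) (h' : XR d y U) : XR d (x * y) (T * U) where
  px n := by simp [← mul_assoc, h.px]
  xp n := by simp [mul_assoc, h'.xp]
  a := h.a.mul d.hA h'.a h'.c
  b := h.b.mul d.hB h'.b h'.e
  c := h.c.mul h'.c
  e := h.e.mul h'.e

lemma xclosed_R (d : XDat H H2) :
    IsClosed {p : (ℕ →ᵇ (H →L[ℂ] H)) × (H2 →L[ℂ] H2) | XR d p.1 p.2} := by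
  have h1 : IsClosed {p : (ℕ →ᵇ (H →L[ℂ] H)) × (H2 →L[ℂ] H2) |
      (∀ n, d.P n * p.1 n = p.1 n) ∧ (∀ n, p.1 n * d.P n = p.1 n)} := by
    have hc : ∀ n, Continuous fun p : (ℕ →ᵇ (H →L[ℂ] H)) × (H2 →L[ℂ] H2) => p.1 n :=
      fun n => (continuous_eval_const n).comp continuous_fst
    simp only [Set.ofPred_and, Set.ofPred_forall]
    refine IsClosed.inter (isClosed_iInter fun n => ?_) (isClosed_iInter fun n => ?_)
    · exact isClosed_eq (continuous_const.mul (hc n)) (hc n)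
    · exact isClosed_eq ((hc n).mul continuous_const) (hc n)
  have h2 := (((h1.inter (xclosed_asy d.hA d.hC)).inter (xclosed_asy d.hB d.hD)).inter
    ((xclosed_com d.hC).preimage continuous_fst)).inter
    ((xclosed_com d.hD).preimage continuous_fst)
  convert h2 using 1
  ext p
  constructor
  · intro h; exact ⟨⟨⟨⟨⟨h.px, h.xp⟩, h.a⟩, h.b⟩, h.c⟩, h.e⟩
  · rintro ⟨⟨⟨⟨⟨h1, h2⟩, h3⟩, h4⟩, h5⟩, h6⟩; exact ⟨h1, h2, h3, h4, h5, h6⟩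

lemma xclosed_Rel (d : XDat H H2) :
    IsClosed {p : (ℕ →ᵇ (H →L[ℂ] H)) × (H2 →L[ℂ] H2) | XRel d p.1 p.2} := by
  have := (xclosed_R d).inter ((xclosed_R d).preimage
    (continuous_star : Continuous (star : (ℕ →ᵇ (H →L[ℂ] H)) × (H2 →L[ℂ] H2) → _)))
  exact this

lemma XRel.add (h : XRel d x T) (h' : XRel d y U) : XRel d (x + y) (T + U) :=
  ⟨h.1.add h'.1, by rw [star_add, star_add]; exact h.2.add h'.2⟩

lemma XRel.smul (c : ℂ) (h : XRel d x T) : XRel d (c • x) (c • T) :=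
  ⟨h.1.smul c, by rw [star_smul, star_smul]; exact h.2.smul _⟩

lemma XRel.mul (h : XRel d x T) (h' : XRel d y U) : XRel d (x * y) (T * U) :=
  ⟨h.1.mul h'.1, by rw [star_mul x y, star_mul T U]; exact h'.2.mul h.2⟩

lemma XRel.star (h : XRel d x T) : XRel d (star x) (star T) :=
  ⟨h.2, by rw [star_star, star_star]; exact h.1⟩

lemma XRel.sub (h : XRel d x T) (h' : XRel d y U) : XRel d (x - y) (T - U) := by
  have := h.add (h'.smul (-1))
  have e1 : x + (-1 : ℂ) • y = x - y := by ext n z; simp [sub_eq_add_neg]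
  have e2 : T + (-1 : ℂ) • U = T - U := by ext z; simp [sub_eq_add_neg]
  rwa [e1, e2] at this

lemma XRel.zero : XRel d 0 0 := by
  have h : XR d 0 0 := by
    constructor <;> simp [XAsy, XCom]
  exact ⟨h, by simpa using h⟩

lemma XR.norm_le (h : XR d x T) (c : ℝ) (hc0 : 0 ≤ c) (hc : ∀ᶠ n in atTop, ‖x n‖ ≤ c) :
    ‖T‖ ≤ c := by
  refine ContinuousLinearMap.opNorm_le_bound _ hc0 fun z => ?_
  have hAd : ∀ n, ‖(d.A n).adjoint‖ ≤ 1 := fun n => by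
    rw [LinearIsometryEquiv.norm_map]; exact d.hA n
  have h1 : Tendsto (fun n => T (d.A n (d.C n ((d.A n).adjoint z)))) atTop (𝓝 (T z)) :=
    (T.continuous.tendsto z).comp (d.hK z)
  have h2 := xtend_right _ (fun n => (d.A n).adjoint) 1 hAd h.a
  have h3 : Tendsto (fun n => (((T ∘L d.A n - d.A n ∘L x n) ∘L d.C n) ∘L (d.A n).adjoint) z)
      atTop (𝓝 0) := by
    have := (((ContinuousLinearMap.apply ℂ H2 z).continuous.tendsto 0).comp h2)
    rw [map_zero] at this
    exact this
  have h4 := h1.sub h3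
  rw [sub_zero] at h4
  refine le_of_tendsto h4.norm ?_
  filter_upwards [hc] with n hn
  have : T (d.A n (d.C n ((d.A n).adjoint z))) -
      (((T ∘L d.A n - d.A n ∘L x n) ∘L d.C n) ∘L (d.A n).adjoint) z
      = d.A n (x n (d.C n ((d.A n).adjoint z))) := by simp
  rw [this]
  calc ‖d.A n (x n (d.C n ((d.A n).adjoint z)))‖
      ≤ 1 * (c * (1 * (1 * ‖z‖))) := by
        refine (d.A n).le_of_opNorm_le_of_le (d.hA n) ?_
        refine (x n).le_of_opNorm_le_of_le hn ?_
        refine (d.C n).le_of_opNorm_le_of_le (d.hC n) ?_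
        exact ContinuousLinearMap.le_of_opNorm_le _ (hAd n) z
    _ = c * ‖z‖ := by ring

lemma XRel.norm_le (h : XRel d x T) : ‖T‖ ≤ ‖x‖ :=
  h.1.norm_le _ (norm_nonneg _) (Eventually.of_forall x.norm_coe_le_norm)

lemma XRel.unique (h : XRel d x T) (h' : XRel d x U) : T = U := by
  have := (h.sub h').norm_le
  simp only [sub_self, norm_zero] at this
  exact sub_eq_zero.1 (norm_le_zero_iff.1 this)

lemma xhalf {A : ℕ → H →L[ℂ] H2} {C P : ℕ → H →L[ℂ] H} (hA : ∀ n, ‖A n‖ ≤ 1)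
    (hC : ∀ n, ‖C n‖ ≤ 1) (hAA : ∀ n, (A n).adjoint ∘L A n = P n) (px : ∀ n, P n * x n = x n)
    (h : XAsy A C x T) (ε : ℝ) (hε : 0 < ε) : ∀ᶠ n in atTop, ‖x n * C n‖ ≤ ‖T‖ + ε := by
  have h1 := h.norm
  rw [norm_zero] at h1
  filter_upwards [h1.eventually (gt_mem_nhds hε)] with n hn
  have hAd : ‖(A n).adjoint‖ ≤ 1 := by
    rw [LinearIsometryEquiv.norm_map]; exact hA n
  have e1 : x n * C n = (A n).adjoint ∘L (T ∘L A n ∘L C n - (T ∘L A n - A n ∘L x n) ∘L C n) := by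
    conv_lhs => rw [← px n, ← hAA n]
    ext z; simp
  rw [e1]
  refine (ContinuousLinearMap.opNorm_comp_le _ _).trans ?_
  refine (mul_le_mul_of_nonneg_right hAd (norm_nonneg _)).trans ?_
  rw [one_mul]
  refine (norm_sub_le _ _).trans (add_le_add ?_ hn.le)
  calc ‖T ∘L A n ∘L C n‖ ≤ ‖T‖ * (‖A n‖ * ‖C n‖) :=
        (ContinuousLinearMap.opNorm_comp_le _ _).trans
          (mul_le_mul_of_nonneg_left (ContinuousLinearMap.opNorm_comp_le _ _) (norm_nonneg _))
    _ ≤ ‖T‖ * (1 * 1) := by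
        gcongr
        · exact hA n
        · exact hC n
    _ = ‖T‖ := by ring

lemma XR.upper (h : XR d x T) (ε : ℝ) (hε : 0 < ε) : ∀ᶠ n in atTop, ‖x n‖ ≤ 2 * ‖T‖ + ε := by
  filter_upwards [xhalf d.hA d.hC d.hAA h.px h.a (ε / 2) (by positivity),
    xhalf d.hB d.hD d.hBB h.px h.b (ε / 2) (by positivity)] with n h1 h2
  rw [← h.xp n, ← d.hCD n, mul_add]
  exact (norm_add_le _ _).trans (by linarith)

lemma XRel.zero_iff (h : XRel d x T) : T = 0 ↔ Tendsto (fun n => ‖x n‖) atTop (𝓝 0) := by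
  constructor
  · rintro rfl
    rw [Metric.tendsto_atTop]
    intro ε hε
    obtain ⟨n0, hn0⟩ := eventually_atTop.1 (h.1.upper (ε / 2) (by positivity))
    refine ⟨n0, fun n hn => ?_⟩
    have := hn0 n hn
    simp only [norm_zero, mul_zero, zero_add, dist_zero_right, norm_norm] at this ⊢
    linarith
  · intro hx
    rw [← norm_le_zero_iff]
    refine le_of_forall_pos_le_add fun ε hε => ?_
    rw [zero_add]
    exact h.1.norm_le ε hε.le ((hx.eventually (gt_mem_nhds hε)).mono fun n hn => le_of_lt hn)

/-- the sequences having a symbol in a given closed algebra -/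
def xY (d : XDat H H2) (𝒯 : NonUnitalStarSubalgebra ℂ (H2 →L[ℂ] H2)) :
    NonUnitalStarSubalgebra ℂ (ℕ →ᵇ (H →L[ℂ] H)) where
  carrier := {x | ∃ T ∈ 𝒯, XRel d x T}
  add_mem' := by
    rintro x y ⟨T, hT, h⟩ ⟨U, hU, h'⟩
    exact ⟨_, add_mem hT hU, h.add h'⟩
  zero_mem' := ⟨0, zero_mem _, XRel.zero⟩
  mul_mem' := by
    rintro x y ⟨T, hT, h⟩ ⟨U, hU, h'⟩
    exact ⟨_, mul_mem hT hU, h.mul h'⟩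
  smul_mem' := by
    rintro c x ⟨T, hT, h⟩
    exact ⟨_, 𝒯.smul_mem c hT, h.smul c⟩
  star_mem' := by
    rintro x ⟨T, hT, h⟩
    exact ⟨_, star_mem hT, h.star⟩

lemma xY_closed (d : XDat H H2) (𝒯 : NonUnitalStarSubalgebra ℂ (H2 →L[ℂ] H2))
    (h𝒯 : IsClosed (𝒯 : Set (H2 →L[ℂ] H2))) :
    IsClosed (xY d 𝒯 : Set (ℕ →ᵇ (H →L[ℂ] H))) := by
  refine isClosed_of_closure_subset fun x hx => ?_
  obtain ⟨u, hu, hux⟩ := mem_closure_iff_seq_limit.1 hx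
  choose T hT hR using hu
  have hc : CauchySeq T := by
    have := hux.cauchySeq
    rw [Metric.cauchySeq_iff] at this ⊢
    intro ε hε
    obtain ⟨m, hm⟩ := this ε hε
    refine ⟨m, fun i hi j hj => lt_of_le_of_lt ?_ (hm i hi j hj)⟩
    rw [dist_eq_norm, dist_eq_norm]
    exact ((hR i).sub (hR j)).norm_le
  obtain ⟨T0, hT0⟩ := cauchySeq_tendsto_of_complete hc
  refine ⟨T0, h𝒯.mem_of_tendsto hT0 (Eventually.of_forall hT), ?_⟩
  exact (xclosed_Rel d).mem_of_tendsto (hux.prodMk_nhds hT0) (Eventually.of_forall hR)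

/-- main abstract theorem -/
theorem xmain (d : XDat H H2) (X : NonUnitalStarSubalgebra ℂ (ℕ →ᵇ (H →L[ℂ] H)))
    (hX : IsClosed (X : Set (ℕ →ᵇ (H →L[ℂ] H))))
    {ι : Type*} (g : ι → ℕ →ᵇ (H →L[ℂ] H)) (Sg : ι → H2 →L[ℂ] H2)
    (hg : ∀ i, g i ∈ X) (hR : ∀ i, XRel d (g i) (Sg i))
    (hXY : X ≤ xY d (NonUnitalStarAlgebra.adjoin ℂ (Set.range Sg)).topologicalClosure)
    (hcut : ∀ r : ℕ, ∃ q ∈ X, (∀ n < r, q n = 0) ∧ ∀ n, r ≤ n → q n = d.P n) :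
    ∃ W : X →⋆ₙₐ[ℂ] (H2 →L[ℂ] H2),
      (∀ i (x : X), (x : ℕ →ᵇ (H →L[ℂ] H)) = g i → W x = Sg i) ∧
      (∀ x : X, W x = 0 ↔ Tendsto (fun n => ‖(x : ℕ →ᵇ (H →L[ℂ] H)) n‖) atTop (𝓝 0)) ∧
      Set.range W = ((NonUnitalStarAlgebra.adjoin ℂ (Set.range Sg)).topologicalClosure :
            Set (H2 →L[ℂ] H2)) := by
  have hex : ∀ x : X, ∃ T ∈ (NonUnitalStarAlgebra.adjoin ℂ (Set.range Sg)).topologicalClosure,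
    XRel d (x : ℕ →ᵇ (H →L[ℂ] H)) T := fun x => hXY x.2
  choose w hw𝒯 hw using hex
  let W : X →⋆ₙₐ[ℂ] (H2 →L[ℂ] H2) :=
    { toFun := w
      map_smul' := fun c x => (hw _).unique ((hw x).smul c)
      map_zero' := (hw _).unique XRel.zero
      map_add' := fun x y => (hw _).unique ((hw x).add (hw y))
      map_mul' := fun x y => (hw _).unique ((hw x).mul (hw y))
      map_star' := fun x => (hw _).unique ((hw x).star) }
  have hW : ∀ x : X, XRel d (x : ℕ →ᵇ (H →L[ℂ] H)) (W x) := hw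
  have h0 : ∀ x : X, W x = 0 ↔ Tendsto (fun n => ‖(x : ℕ →ᵇ (H →L[ℂ] H)) n‖) atTop (𝓝 0) :=
    fun x => (hW x).zero_iff
  have h1 : ∀ i (x : X), (x : ℕ →ᵇ (H →L[ℂ] H)) = g i → W x = Sg i := by
    intro i x hx
    have := hW x
    rw [hx] at this
    exact this.unique (hR i)
  refine ⟨W, h1, h0, ?_⟩
  apply Set.Subset.antisymm
  · rintro _ ⟨x, rfl⟩
    exact hw𝒯 x
  · have : CompleteSpace X := hX.completeSpace_coe
    let F : NormedAddGroupHom X (H2 →L[ℂ] H2) :=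
      { toFun := W
        map_add' := map_add W
        bound' := ⟨1, fun x => by rw [one_mul]; exact (hW x).norm_le⟩ }
    have hF : F.SurjectiveOnWith F.range 3 := by
      rintro _ ⟨x, rfl⟩
      change ∃ y, W y = W x ∧ ‖y‖ ≤ 3 * ‖W x‖
      by_cases hx : W x = 0
      · exact ⟨0, by rw [hx, map_zero], by simp [hx]⟩
      have hpos : 0 < ‖W x‖ := norm_pos_iff.2 hx
      obtain ⟨r, hr⟩ := eventually_atTop.1 ((hW x).1.upper ‖W x‖ hpos)
      obtain ⟨q, hqX, hq0, hq1⟩ := hcut r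
      let y : X := ⟨q, hqX⟩ * x
      have hy : ∀ n, (y : ℕ →ᵇ (H →L[ℂ] H)) n = q n * (x : ℕ →ᵇ (H →L[ℂ] H)) n := fun n => rfl
      have hy1 : ∀ n, r ≤ n → (y : ℕ →ᵇ (H →L[ℂ] H)) n = (x : ℕ →ᵇ (H →L[ℂ] H)) n := by
        intro n hn
        rw [hy, hq1 n hn, (hW x).1.px]
      refine ⟨y, ?_, ?_⟩
      · rw [← sub_eq_zero, ← map_sub, h0]
        refine tendsto_const_nhds.congr' ?_
        filter_upwards [eventually_ge_atTop r] with n hn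
        change (0 : ℝ) = ‖(y : ℕ →ᵇ (H →L[ℂ] H)) n - (x : ℕ →ᵇ (H →L[ℂ] H)) n‖
        rw [hy1 n hn, sub_self, norm_zero]
      · change ‖(y : ℕ →ᵇ (H →L[ℂ] H))‖ ≤ _
        refine (BoundedContinuousFunction.norm_le (by positivity)).2 fun n => ?_
        by_cases hn : r ≤ n
        · rw [hy1 n hn]
          linarith [hr n hn]
        · rw [hy, hq0 n (by omega), zero_mul, norm_zero]; positivity
    have hF2 := controlled_closure_of_complete (G := X) (f := F) (K := F.range) (C := 3) (ε := 1) (by norm_num) one_pos hF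
    intro T hT
    have hle : NonUnitalStarAlgebra.adjoin ℂ (Set.range Sg) ≤ NonUnitalStarAlgHom.range W := by
      refine NonUnitalStarAlgebra.adjoin_le ?_
      rintro _ ⟨i, rfl⟩
      exact ⟨⟨g i, hg i⟩, h1 i _ rfl⟩
    have hT2 : T ∈ F.range.topologicalClosure := by
      have hT' : T ∈ closure ((NonUnitalStarAlgebra.adjoin ℂ (Set.range Sg)) :
        Set (H2 →L[ℂ] H2)) := hT
      refine closure_mono ?_ hT'
      intro z hz
      obtain ⟨x, hx⟩ := hle hz
      exact ⟨x, hx⟩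
    obtain ⟨x, hx, -⟩ := hF2 T hT2
    exact ⟨x, hx⟩
end Abs

section Conc
open Filter Topology BoundedContinuousFunction
set_option linter.unusedSectionVars false

variable {H : Type*} [NormedAddCommGroup H] [InnerProductSpace ℂ H]
    [CompleteSpace H] {H2 : Type*} [NormedAddCommGroup H2] [InnerProductSpace ℂ H2]
    [CompleteSpace H2]

lemma xext {ι F : Type*} [NormedAddCommGroup F] [NormedSpace ℂ F] (e : HilbertBasis ι ℂ H)
    (u v : H →L[ℂ] F) (h : ∀ k, u (e k) = v (e k)) : u = v := by
  refine ContinuousLinearMap.ext_on (s := Set.range e) ?_ ?_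
  · rw [Submodule.dense_iff_topologicalClosure_eq_top]
    exact e.dense_span
  · rintro _ ⟨k, rfl⟩; exact h k

lemma xvec {ι : Type*} (e : HilbertBasis ι ℂ H) (y z : H)
    (h : ∀ k, inner ℂ (e k) y = inner ℂ (e k) z) : y = z := by
  apply e.repr.injective
  ext k
  simp only [HilbertBasis.repr_apply_apply, h]

lemma xinner {ι : Type*} [DecidableEq ι] (e : HilbertBasis ι ℂ H) (j k : ι) :
    inner ℂ (e j) (e k) = if j = k then (1 : ℂ) else 0 :=
  orthonormal_iff_ite.1 e.orthonormal j k

lemma xorth {ι : Type*} (e : HilbertBasis ι ℂ H) (Z : H →L[ℂ] H2) (c : ℝ) (hc : 0 ≤ c)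
    (ho : ∀ j k, j ≠ k → inner ℂ (Z (e j)) (Z (e k)) = 0) (hn : ∀ k, ‖Z (e k)‖ ≤ c) :
    ‖Z‖ ≤ c := by
  classical
  refine ContinuousLinearMap.opNorm_le_bound _ hc fun y => ?_
  have key : ∀ s : Finset ι, ‖Z (∑ i ∈ s, e.repr y i • e i)‖ ≤ c * ‖∑ i ∈ s, e.repr y i • e i‖ := by
    intro s
    have h1 : ∀ {G : Type _} [NormedAddCommGroup G] [InnerProductSpace ℂ G] (w : ι → G),
        (∀ j k, j ≠ k → inner ℂ (w j) (w k) = 0) →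
        ‖∑ i ∈ s, e.repr y i • w i‖ ^ 2 = ∑ i ∈ s, ‖e.repr y i‖ ^ 2 * ‖w i‖ ^ 2 := by
      intro G _ _ w hw
      induction s using Finset.induction_on with
      | empty => simp
      | insert a s ha ih =>
        rw [Finset.sum_insert ha, Finset.sum_insert ha, ← ih]
        have : inner ℂ (e.repr y a • w a) (∑ i ∈ s, e.repr y i • w i) = 0 := by
          rw [inner_sum]
          refine Finset.sum_eq_zero fun i hi => ?_
          rw [inner_smul_left, inner_smul_right, hw a i (by rintro rfl; exact ha hi)]
          simp
        have h2 := norm_add_sq_eq_norm_sq_add_norm_sq_of_inner_eq_zero _ _ this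
        rw [sq, h2, norm_smul]; ring
    have h1' : ‖∑ i ∈ s, e.repr y i • e i‖ ^ 2 = ∑ i ∈ s, ‖e.repr y i‖ ^ 2 * ‖e i‖ ^ 2 :=
      h1 _ (fun j k hjk => e.orthonormal.2 hjk)
    have h1'' : ∀ s : Finset ι, ‖∑ i ∈ s, e.repr y i • Z (e i)‖ ^ 2
        = ∑ i ∈ s, ‖e.repr y i‖ ^ 2 * ‖Z (e i)‖ ^ 2 := by
      intro s
      induction s using Finset.induction_on with
      | empty => simp
      | insert a s ha ih =>
        rw [Finset.sum_insert ha, Finset.sum_insert ha, ← ih]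
        have : inner ℂ (e.repr y a • Z (e a)) (∑ i ∈ s, e.repr y i • Z (e i)) = 0 := by
          rw [inner_sum]
          refine Finset.sum_eq_zero fun i hi => ?_
          rw [inner_smul_left, inner_smul_right, ho a i (by rintro rfl; exact ha hi)]
          simp
        have h2 := norm_add_sq_eq_norm_sq_add_norm_sq_of_inner_eq_zero _ _ this
        rw [sq, h2, norm_smul]; ring
    rw [map_sum]
    simp only [map_smul]
    refine le_of_sq_le_sq ?_ (by positivity)
    rw [h1'', mul_pow, h1', Finset.mul_sum]
    refine Finset.sum_le_sum fun i _ => ?_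
    rw [e.orthonormal.1 i, one_pow, mul_one, mul_comm]
    gcongr
    exact hn i
  have ht := e.hasSum_repr y
  exact le_of_tendsto_of_tendsto' ((Z.continuous.tendsto _).comp ht).norm (ht.norm.const_mul c) key

noncomputable def xmk (e : HilbertBasis ℕ ℂ H) (n : ℕ) (w : ℕ → H2) : H →L[ℂ] H2 :=
  ∑ k ∈ Finset.range n, (innerSL ℂ (e k)).smulRight (w k)

lemma xmk_apply (e : HilbertBasis ℕ ℂ H) (n : ℕ) (w : ℕ → H2) (k : ℕ) :
    xmk e n w (e k) = if k < n then w k else 0 := by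
  simp [xmk, xinner, Finset.sum_ite_eq']

lemma xmk_norm (e : HilbertBasis ℕ ℂ H) (n : ℕ) (w : ℕ → H2)
    (ho : ∀ j k, j < n → k < n → j ≠ k → inner ℂ (w j) (w k) = 0) (hn : ∀ k < n, ‖w k‖ ≤ 1) :
    ‖xmk e n w‖ ≤ 1 := by
  refine xorth e _ 1 zero_le_one ?_ ?_
  · intro j k hjk
    rw [xmk_apply, xmk_apply]
    split_ifs <;> simp_all
  · intro k
    rw [xmk_apply]
    split_ifs <;> simp_all

lemma xdiv {N : ℕ} {i : ℕ} (hi : i < N) (b s : ℕ) : b * N + i = s ↔ s % N = i ∧ b = s / N := by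
  constructor
  · rintro rfl
    refine ⟨?_, ?_⟩
    · rw [Nat.add_comm, Nat.add_mul_mod_self_right, Nat.mod_eq_of_lt hi]
    · rw [Nat.add_div_of_dvd_right ⟨b, by ring⟩, Nat.div_eq_of_lt hi,
        Nat.mul_div_cancel _ (by omega)]; rfl
  · rintro ⟨rfl, rfl⟩
    exact Nat.div_add_mod' s N

/-- number of digits -/
def xl (N k : ℕ) : ℕ := (Nat.digits N k).length

lemma xl_le {N : ℕ} (hN : 2 ≤ N) (k m : ℕ) : xl N k ≤ m ↔ k < N ^ m :=
  Nat.digits_length_le_iff hN k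

lemma xl_zero (N : ℕ) : xl N 0 = 0 := by simp [xl]

lemma xl_succ {N : ℕ} (hN : 2 ≤ N) (k i : ℕ) (hi : i < N) (h : k * N + i ≠ 0) :
    xl N (k * N + i) = xl N k + 1 := by
  unfold xl
  rw [show k * N + i = i + N * k by ring, Nat.digits_add N hN i k hi]
  · simp
  · by_contra hc
    push Not at hc
    simp [hc.1, hc.2] at h

/-- the vectors -/
noncomputable def xv (f : HilbertBasis (ℕ × ℕ) ℂ H2) (N R M k : ℕ) : H2 :=
  (((√(M : ℝ))⁻¹ : ℝ) : ℂ) • ∑ t ∈ Finset.range M, f (R - (xl N k + t), N ^ (xl N k + t) - 1 - k)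

lemma xv_inner (f : HilbertBasis (ℕ × ℕ) ℂ H2) {N : ℕ} (hN : 2 ≤ N) (R M j k : ℕ) (hM : 0 < M)
    (hj : xl N j + M ≤ R + 1) (hk : xl N k + M ≤ R + 1) :
    inner ℂ (xv f N R M j) (xv f N R M k) = if j = k then (1 : ℂ) else 0 := by
  unfold xv
  rw [inner_smul_left, inner_smul_right, sum_inner]
  have h1 : ∀ t ∈ Finset.range M, inner ℂ (f (R - (xl N j + t), N ^ (xl N j + t) - 1 - j))
      (∑ t ∈ Finset.range M, f (R - (xl N k + t), N ^ (xl N k + t) - 1 - k))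
      = if j = k then (1 : ℂ) else 0 := by
    intro t ht
    rw [Finset.mem_range] at ht
    rw [inner_sum]
    have h2 : ∀ t' ∈ Finset.range M, inner ℂ (f (R - (xl N j + t), N ^ (xl N j + t) - 1 - j))
        (f (R - (xl N k + t'), N ^ (xl N k + t') - 1 - k))
        = if t = t' then (if j = k then (1 : ℂ) else 0) else 0 := by
      intro t' ht'
      rw [Finset.mem_range] at ht'
      rw [xinner]
      have hjl : j < N ^ (xl N j + t) := (xl_le hN _ _).1 (by omega)
      have hkl : k < N ^ (xl N k + t') := (xl_le hN _ _).1 (by omega)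
      by_cases hjk : j = k
      · subst hjk
        by_cases htt : t = t'
        · subst htt; simp
        · rw [if_neg htt, if_neg]
          intro h
          have := (Prod.mk.inj h).1
          omega
      · rw [if_neg hjk, ite_self, if_neg]
        intro h
        obtain ⟨h3, h4⟩ := Prod.mk.inj h
        have h5 : xl N j + t = xl N k + t' := by omega
        rw [h5] at h4 hjl
        omega
    rw [Finset.sum_congr rfl h2, Finset.sum_ite_eq, if_pos (Finset.mem_range.2 ht)]
  rw [Finset.sum_congr rfl h1]
  split_ifs with h
  · have hM' : (0 : ℝ) < M := by exact_mod_cast hM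
    simp only [Finset.sum_const, Finset.card_range, nsmul_eq_mul, mul_one, Complex.conj_ofReal]
    rw [← Complex.ofReal_natCast, ← Complex.ofReal_mul, ← Complex.ofReal_mul]
    have : √(M : ℝ) ≠ 0 := (Real.sqrt_pos.2 hM').ne'
    norm_cast
    field_simp
    exact (Real.sq_sqrt hM'.le).symm
  · simp

section Sgs
variable (f : HilbertBasis (ℕ × ℕ) ℂ H2) {N : ℕ} (hN : 2 ≤ N) (Sg : Fin N → H2 →L[ℂ] H2)
    (hSg : ∀ (i : Fin N) (m r : ℕ),
      Sg i (f (m, r)) = if m = 0 then 0 else f (m - 1, r * N + (i : ℕ)))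
include hN hSg

lemma xSg_adj (i : Fin N) (m s : ℕ) :
    star (Sg i) (f (m, s)) = if s % N = i then f (m + 1, s / N) else 0 := by
  refine xvec f _ _ fun ab => ?_
  obtain ⟨a, b⟩ := ab
  rw [ContinuousLinearMap.star_eq_adjoint, ContinuousLinearMap.adjoint_inner_right, hSg]
  have hd := xdiv i.2 b s
  by_cases ha : a = 0
  · subst ha
    rw [if_pos rfl, inner_zero_left]
    split_ifs <;> simp [xinner]
  · rw [if_neg ha, xinner]
    by_cases h : s % N = i
    · rw [if_pos h, xinner]
      congr 1
      simp only [Prod.mk.injEq, hd, h, true_and, eq_iff_iff]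
      constructor <;> rintro ⟨h1, h2⟩ <;> exact ⟨by omega, h2⟩
    · rw [if_neg h, inner_zero_right, if_neg]
      intro hh
      exact h (hd.1 (Prod.mk.inj hh).2).1

lemma xSg_phi (i : Fin N) (m L k : ℕ) (hk : k < N ^ L) :
    Sg (Fin.rev i) (f (m, N ^ L - 1 - k))
      = if m = 0 then 0 else f (m - 1, N ^ (L + 1) - 1 - (k * N + i)) := by
  rw [hSg]
  congr 3
  rw [Fin.val_rev]
  have hi := i.2
  obtain ⟨q, hq⟩ := Nat.exists_eq_add_of_lt hk
  have : N ^ (L + 1) = (k + q + 1) * N := by rw [pow_succ, hq]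
  rw [this, hq, show k + q + 1 - 1 - k = q by omega,
    show (k + q + 1) * N = q * N + k * N + N by ring]
  omega

lemma xSg_adj_phi (i : Fin N) (m L k : ℕ) (hk : k < N ^ (L + 1)) :
    star (Sg (Fin.rev i)) (f (m, N ^ (L + 1) - 1 - k))
      = if k % N = i then f (m + 1, N ^ L - 1 - k / N) else 0 := by
  rw [xSg_adj f hN Sg hSg]
  have hkN : k / N < N ^ L := by
    rw [Nat.div_lt_iff_lt_mul (by omega), ← pow_succ]; exact hk
  have hm : k % N < N := Nat.mod_lt _ (by omega)
  have h1 : (N ^ L - 1 - k / N) * N + (N - 1 - k % N) = N ^ (L + 1) - 1 - k := by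
    obtain ⟨q, hq⟩ := Nat.exists_eq_add_of_lt hkN
    have : N ^ (L + 1) = (k / N + q + 1) * N := by rw [pow_succ, hq]
    rw [this, hq, show k / N + q + 1 - 1 - k / N = q by omega,
      show (k / N + q + 1) * N = q * N + k / N * N + N by ring]
    have := Nat.div_add_mod' k N
    omega
  obtain ⟨h2, h3⟩ := (xdiv (by omega) _ _).1 h1
  rw [h2, ← h3, Fin.val_rev]
  have hi := i.2
  congr 1
  simp only [eq_iff_iff]
  omega

lemma xV1 (i : Fin N) (R M k : ℕ) (hk : xl N k + M ≤ R) (h0 : k * N + i ≠ 0) :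
    Sg (Fin.rev i) (xv f N R M k) = xv f N R M (k * N + i) := by
  unfold xv
  rw [map_smul, map_sum, xl_succ hN k i i.2 h0]
  congr 1
  refine Finset.sum_congr rfl fun t ht => ?_
  rw [Finset.mem_range] at ht
  rw [xSg_phi f hN Sg hSg _ _ _ _ ((xl_le hN _ _).1 (by omega)), if_neg (by omega)]
  congr 2
  · omega
  · rw [show xl N k + t + 1 = xl N k + 1 + t by omega]

lemma xV2 (i : Fin N) (k : ℕ) :
    Sg i (xv f N (xl N k) 1 k) = 0 := by
  simp [xv, hSg]

lemma xV4 (i : Fin N) (R M k : ℕ) (hk : xl N k + M ≤ R + 1) (h0 : k ≠ 0) :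
    star (Sg (Fin.rev i)) (xv f N R M k) = if k % N = i then xv f N R M (k / N) else 0 := by
  unfold xv
  have hk' : k / N * N + k % N = k := Nat.div_add_mod' k N
  have hl : xl N k = xl N (k / N) + 1 := by
    have := xl_succ hN (k / N) (k % N) (Nat.mod_lt _ (by omega)) (by omega)
    rwa [hk'] at this
  have h1 : ∀ t ∈ Finset.range M, star (Sg (Fin.rev i)) (f (R - (xl N k + t),
      N ^ (xl N k + t) - 1 - k)) = if k % N = i then
        f (R - (xl N (k / N) + t), N ^ (xl N (k / N) + t) - 1 - k / N) else 0 := by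
    intro t ht
    rw [Finset.mem_range] at ht
    have h2 : xl N k + t = xl N (k / N) + t + 1 := by omega
    have h3 : k < N ^ (xl N (k / N) + t + 1) := (xl_le hN _ _).1 (by omega)
    rw [h2, xSg_adj_phi f hN Sg hSg _ _ _ _ h3]
    congr 3
    omega
  rw [map_smul, map_sum, Finset.sum_congr rfl h1]
  split_ifs <;> simp

lemma xV3 (i : Fin N) (hi : (i : ℕ) = 0) (R M : ℕ) (hM : M ≤ R) :
    ‖Sg (Fin.rev i) (xv f N R M 0) - xv f N R M 0‖ ≤ 2 * (√(M : ℝ))⁻¹ := by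
  unfold xv
  have h1 : ∀ t ∈ Finset.range M, Sg (Fin.rev i) (f (R - (xl N 0 + t),
      N ^ (xl N 0 + t) - 1 - 0)) = f (R - (t + 1), N ^ (t + 1) - 1) := by
    intro t ht
    rw [Finset.mem_range] at ht
    rw [xl_zero, zero_add, xSg_phi f hN Sg hSg _ _ _ _ (by positivity), if_neg (by omega), hi]
    congr 2
    simp
  have h2 : ∀ t ∈ Finset.range M, f (R - (xl N 0 + t),
      N ^ (xl N 0 + t) - 1 - 0) = f (R - t, N ^ t - 1) := by
    intro t ht
    rw [xl_zero]; simp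
  rw [map_smul, map_sum, Finset.sum_congr rfl h1, Finset.sum_congr rfl h2, ← smul_sub,
    ← Finset.sum_sub_distrib, Finset.sum_range_sub (fun t => f (R - t, N ^ t - 1)), norm_smul,
    mul_comm]
  gcongr
  · refine (norm_sub_le _ _).trans ?_
    rw [f.orthonormal.1, f.orthonormal.1]; norm_num
  · simp [abs_of_nonneg]

lemma xV5 (i : Fin N) (R M : ℕ) (hM : M ≤ R) :
    ‖star (Sg (Fin.rev i)) (xv f N R M 0) - (if (i : ℕ) = 0 then xv f N R M 0 else 0)‖
      ≤ 2 * (√(M : ℝ))⁻¹ := by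
  rcases M with _ | M
  · simp [xv]
  have h1 : ∀ t ∈ Finset.range M, star (Sg (Fin.rev i)) (f (R - (t + 1),
      N ^ (t + 1) - 1)) = if (i : ℕ) = 0 then f (R - t, N ^ t - 1) else 0 := by
    intro t ht
    rw [Finset.mem_range] at ht
    have := xSg_adj_phi f hN Sg hSg i (R - (t + 1)) t 0 (by positivity)
    simp only [Nat.sub_zero, Nat.zero_mod, Nat.zero_div] at this
    rw [this, show R - (t + 1) + 1 = R - t by omega]
    simp only [eq_comm]
  have hv : xv f N R (M + 1) 0 = (((√((M + 1 : ℕ) : ℝ))⁻¹ : ℝ) : ℂ) •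
      ∑ t ∈ Finset.range (M + 1), f (R - t, N ^ t - 1) := by
    unfold xv; rw [xl_zero]; simp
  set c : ℂ := (((√((M + 1 : ℕ) : ℝ))⁻¹ : ℝ) : ℂ) with hc
  set J := star (Sg (Fin.rev i)) (f (R - 0, N ^ 0 - 1)) with hJ
  have hJn : ‖J‖ ≤ 1 := by
    rw [hJ, xSg_adj f hN Sg hSg]
    split_ifs
    · rw [f.orthonormal.1]
    · simp
  have hcn : ‖c‖ = (√((M + 1 : ℕ) : ℝ))⁻¹ := by
    rw [hc, Complex.norm_real, Real.norm_of_nonneg (by positivity)]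
  have h2 : star (Sg (Fin.rev i)) (xv f N R (M + 1) 0)
      - (if (i : ℕ) = 0 then xv f N R (M + 1) 0 else 0)
      = c • (J - if (i : ℕ) = 0 then f (R - M, N ^ M - 1) else 0) := by
    rw [hv, map_smul, map_sum, Finset.sum_range_succ', Finset.sum_congr rfl h1, ← hJ]
    split_ifs
    · rw [Finset.sum_range_succ, ← smul_sub]; congr 1; abel
    · simp
  rw [h2, norm_smul, hcn, mul_comm]
  gcongr
  refine (norm_sub_le _ _).trans ?_
  have : ‖(if (i : ℕ) = 0 then f (R - M, N ^ M - 1) else 0 : H2)‖ ≤ 1 := by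
    split_ifs
    · rw [f.orthonormal.1]
    · simp
  linarith
end Sgs
end Conc

section Conc2
open Filter Topology BoundedContinuousFunction
set_option linter.unusedSectionVars false

variable {H : Type*} [NormedAddCommGroup H] [InnerProductSpace ℂ H]
    [CompleteSpace H] {H2 : Type*} [NormedAddCommGroup H2] [InnerProductSpace ℂ H2]
    [CompleteSpace H2]

lemma xorth0 (e : HilbertBasis ℕ ℂ H) (Z : H →L[ℂ] H2) (c : ℝ) (hc : 0 ≤ c)
    (h0 : ∀ k, k ≠ 0 → Z (e k) = 0) (h1 : ‖Z (e 0)‖ ≤ c) : ‖Z‖ ≤ c := by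
  refine xorth e Z c hc ?_ ?_
  · intro j k hjk
    by_cases hj : j = 0
    · rw [h0 k (by omega), inner_zero_right]
    · rw [h0 j hj, inner_zero_left]
  · intro k
    by_cases hk : k = 0
    · rw [hk]; exact h1
    · rw [h0 k hk, norm_zero]; exact hc

lemma xstrong {ι : Type*} (f : HilbertBasis ι ℂ H2) (K : ℕ → H2 →L[ℂ] H2) (hK : ∀ n, ‖K n‖ ≤ 1)
    (hf : ∀ b, ∀ᶠ n in atTop, K n (f b) = f b) (z : H2) :
    Tendsto (fun n => K n z) atTop (𝓝 z) := by
  rw [← tendsto_sub_nhds_zero_iff]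
  have hcl : IsClosed {z : H2 | Tendsto (fun n => K n z - z) atTop (𝓝 0)} := by
    refine xclosed (fun n z => K n z - z) 2 ?_
    intro n p q
    have : K n p - p - (K n q - q) = K n (p - q) - (p - q) := by rw [map_sub]; abel
    rw [this, two_mul]
    refine (norm_sub_le _ _).trans (add_le_add ?_ le_rfl)
    simpa using (K n).le_of_opNorm_le (hK n) (p - q)
  have hz : z ∈ closure (Submodule.span ℂ (Set.range f) : Set H2) := by
    have := f.dense_span
    rw [← Submodule.topologicalClosure_coe, this]; trivial
  refine hcl.closure_subset_iff.2 ?_ hz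
  intro w hw
  induction hw using Submodule.span_induction with
  | mem w hw =>
    obtain ⟨b, rfl⟩ := hw
    refine tendsto_const_nhds.congr' ?_
    filter_upwards [hf b] with n hn
    rw [hn, sub_self]
  | zero => simp
  | add u v _ _ hu hv =>
    have := Tendsto.add hu hv
    rw [add_zero] at this
    refine this.congr fun n => ?_
    rw [map_add]; abel
  | smul c u _ hu =>
    have := Tendsto.const_smul hu c
    rw [smul_zero] at this
    refine this.congr fun n => ?_
    rw [map_smul, smul_sub]

section PS
variable (e : HilbertBasis ℕ ℂ H) (P : ℕ → H →L[ℂ] H)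
    (hP : ∀ n k : ℕ, P n (e k) = if k < n then e k else 0)
include hP

lemma xP_star (n : ℕ) : star (P n) = P n := by
  refine xext e _ _ fun k => xvec e _ _ fun j => ?_
  rw [ContinuousLinearMap.star_eq_adjoint, ContinuousLinearMap.adjoint_inner_right, hP, hP]
  by_cases hjk : j = k
  · subst hjk; split_ifs <;> simp
  · split_ifs <;> simp [xinner, hjk]

lemma xP_norm (n : ℕ) : ‖P n‖ ≤ 1 := by
  refine xorth e _ 1 zero_le_one ?_ ?_
  · intro j k hjk
    rw [hP, hP]
    split_ifs <;> simp [xinner, hjk]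
  · intro k
    rw [hP]
    split_ifs <;> simp [e.orthonormal.1 k]

lemma xP_sq (n : ℕ) : P n * P n = P n := by
  refine xext e _ _ fun k => ?_
  rw [mul_apply_eq_comp, hP]
  split_ifs with h
  · rw [hP, if_pos h]
  · simp

lemma xisom (n : ℕ) (w : ℕ → H2)
    (hw : ∀ j k, j < n → k < n → inner ℂ (w j) (w k) = if j = k then (1 : ℂ) else 0) :
    ‖xmk e n w‖ ≤ 1 ∧ (xmk e n w).adjoint ∘L xmk e n w = P n := by
  constructor
  · refine xmk_norm e n w (fun j k hj hk hjk => by rw [hw j k hj hk, if_neg hjk]) fun k hk => ?_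
    have := hw k k hk hk
    rw [if_pos rfl, inner_self_eq_norm_sq_to_K] at this
    have h3 : ((‖w k‖ ^ 2 : ℝ) : ℂ) = 1 := by rw [Complex.ofReal_pow]; exact this
    have h2 : ‖w k‖ ^ 2 = 1 := Complex.ofReal_eq_one.1 h3
    nlinarith [norm_nonneg (w k)]
  · refine xext e _ _ fun k => xvec e _ _ fun j => ?_
    rw [ContinuousLinearMap.comp_apply, ContinuousLinearMap.adjoint_inner_right, xmk_apply,
      xmk_apply, hP]
    by_cases hj : j < n <;> by_cases hk : k < n <;> simp only [hj, hk, if_true, if_false]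
    · rw [hw j k hj hk, xinner]
    · simp
    · rw [inner_zero_left, xinner, if_neg (by omega)]
    · simp

/-- compression sequence -/
noncomputable def xcmp (N : ℕ) (T : H →L[ℂ] H) : ℕ →ᵇ (H →L[ℂ] H) :=
  ofNormedAddCommGroupDiscrete (fun n => P (N ^ n) * T * P (N ^ n)) ‖T‖ (fun n => by
    calc ‖P (N ^ n) * T * P (N ^ n)‖ ≤ ‖P (N ^ n)‖ * ‖T‖ * ‖P (N ^ n)‖ :=
          (norm_mul_le _ _).trans (by gcongr; exact norm_mul_le _ _)
      _ ≤ 1 * ‖T‖ * 1 := by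
          have := xP_norm e P hP (N ^ n)
          gcongr
      _ = ‖T‖ := by ring)

lemma xcmp_apply (N : ℕ) (T : H →L[ℂ] H) (n : ℕ) :
    xcmp e P hP N T n = P (N ^ n) * T * P (N ^ n) := rfl

lemma xcmp_star (N : ℕ) (T : H →L[ℂ] H) : star (xcmp e P hP N T) = xcmp e P hP N (star T) := by
  ext1 n
  change star (P (N ^ n) * T * P (N ^ n)) = P (N ^ n) * star T * P (N ^ n)
  rw [star_mul, star_mul, xP_star e P hP, mul_assoc]

end PS

noncomputable def xc (N n k : ℕ) : ℝ := min 1 ((xl N k : ℝ) / ((n / 2 + 1 : ℕ) : ℝ))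

lemma xc_nonneg (N n k : ℕ) : 0 ≤ xc N n k := le_min zero_le_one (by positivity)
lemma xc_le (N n k : ℕ) : xc N n k ≤ 1 := min_le_left _ _
lemma xc_zero (N n : ℕ) : xc N n 0 = 0 := by simp [xc, xl_zero]
lemma xc_one (N n k : ℕ) (h : n / 2 + 1 ≤ xl N k) : xc N n k = 1 := by
  unfold xc
  rw [min_eq_left]
  rw [one_le_div (by positivity)]
  exact_mod_cast h
lemma xc_diff (N n k j : ℕ) (h : xl N j = xl N k + 1) :
    |xc N n k - xc N n j| ≤ 1 / ((n / 2 + 1 : ℕ) : ℝ) := by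
  unfold xc
  refine (abs_min_sub_min_le_max _ _ _ _).trans ?_
  rw [h, ← sub_div, sub_self, abs_zero, abs_div,
    abs_of_nonneg (by positivity : (0:ℝ) ≤ ((n / 2 + 1 : ℕ) : ℝ))]
  simp
  positivity

lemma xpowdiff {N : ℕ} (hN : 2 ≤ N) (s j : ℕ) (h : s ≤ j) :
    xl N (N ^ (j + 1) - 1 - s) = j + 1 ∧ N ^ (j + 1) - 1 - (N ^ (j + 1) - 1 - s) = s := by
  have h1 : j < N ^ j := Nat.lt_pow_self (by omega)
  have h2 : N ^ (j + 1) = N ^ j * N := pow_succ N j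
  have h3 : N ^ j * 2 ≤ N ^ j * N := Nat.mul_le_mul_left _ hN
  refine ⟨?_, by omega⟩
  apply le_antisymm
  · rw [xl_le hN]; omega
  · by_contra hc
    have := (xl_le hN (N ^ (j + 1) - 1 - s) j).1 (by omega)
    omega

noncomputable def xdat (e : HilbertBasis ℕ ℂ H) (P : ℕ → H →L[ℂ] H)
    (hP : ∀ n k : ℕ, P n (e k) = if k < n then e k else 0)
    (f : HilbertBasis (ℕ × ℕ) ℂ H2) (N : ℕ) (hN : 2 ≤ N) : XDat H H2 :=
  have hA : ∀ n, _ := fun n => xisom e P hP (N ^ n) (xv f N n 1) (fun j k hj hk =>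
    xv_inner f hN n 1 j k one_pos (by have := (xl_le hN _ _).2 hj; omega)
      (by have := (xl_le hN _ _).2 hk; omega))
  have hB : ∀ n, _ := fun n => xisom e P hP (N ^ n) (xv f N (2 * n + 1) (n / 2 + 1))
    (fun j k hj hk => xv_inner f hN _ _ j k (by omega) (by have := (xl_le hN _ _).2 hj; omega)
      (by have := (xl_le hN _ _).2 hk; omega))
  have hC : ∀ c : ℕ → ℝ, (∀ k, 0 ≤ c k) → (∀ k, c k ≤ 1) → ∀ n,
      ‖xmk e n (fun k => (c k : ℂ) • e k)‖ ≤ 1 := by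
    intro c h0 h1 n
    refine xmk_norm e n _ (fun j k _ _ hjk => ?_) fun k _ => ?_
    · rw [inner_smul_left, inner_smul_right, xinner, if_neg hjk]; simp
    · rw [norm_smul, e.orthonormal.1, mul_one, Complex.norm_real, Real.norm_of_nonneg (h0 k)]
      exact h1 k
  have hCs : ∀ c : ℕ → ℝ, ∀ n, star (xmk e n (fun k => (c k : ℂ) • e k)) =
      xmk e n (fun k => (c k : ℂ) • e k) := by
    intro c n
    refine xext e _ _ fun k => xvec e _ _ fun j => ?_
    rw [ContinuousLinearMap.star_eq_adjoint, ContinuousLinearMap.adjoint_inner_right, xmk_apply,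
      xmk_apply]
    by_cases hjk : j = k
    · subst hjk
      split_ifs
      · rw [inner_smul_left, inner_smul_right, Complex.conj_ofReal]
      · rw [inner_zero_left, inner_zero_right]
    · split_ifs
      · rw [inner_smul_left, inner_smul_right, xinner, if_neg hjk, mul_zero, mul_zero]
      · rw [inner_smul_left, inner_zero_right, xinner, if_neg hjk, mul_zero]
      · rw [inner_smul_right, inner_zero_left, xinner, if_neg hjk, mul_zero]
      · rw [inner_zero_left, inner_zero_right]
  { A := fun n => xmk e (N ^ n) (xv f N n 1)
    B := fun n => xmk e (N ^ n) (xv f N (2 * n + 1) (n / 2 + 1))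
    C := fun n => xmk e (N ^ n) (fun k => (xc N n k : ℂ) • e k)
    D := fun n => xmk e (N ^ n) (fun k => ((1 - xc N n k : ℝ) : ℂ) • e k)
    P := fun n => P (N ^ n)
    hA := fun n => (hA n).1
    hB := fun n => (hB n).1
    hC := fun n => hC (xc N n) (xc_nonneg N n) (xc_le N n) _
    hD := fun n => hC (fun k => 1 - xc N n k) (fun k => by linarith [xc_le N n k])
      (fun k => by linarith [xc_nonneg N n k]) _
    hCs := fun n => hCs _ _
    hDs := fun n => hCs (fun k => 1 - xc N n k) _
    hPs := fun n => xP_star e P hP _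
    hAA := fun n => (hA n).2
    hBB := fun n => (hB n).2
    hCD := fun n => by
      refine xext e _ _ fun k => ?_
      rw [_root_.add_apply, xmk_apply, xmk_apply, hP]
      split_ifs
      · rw [← add_smul, ← Complex.ofReal_add]; simp
      · simp
    hK := by
      refine xstrong f (fun n => xmk e (N ^ n) (xv f N n 1) ∘L
        xmk e (N ^ n) (fun k => (xc N n k : ℂ) • e k) ∘L (xmk e (N ^ n) (xv f N n 1)).adjoint)
        (fun n => ?_) ?_
      · have h1 : ‖(xmk e (N ^ n) (xv f N n 1)).adjoint‖ ≤ 1 := by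
          rw [LinearIsometryEquiv.norm_map]; exact (hA n).1
        refine (ContinuousLinearMap.opNorm_comp_le _ _).trans
          (mul_le_one₀ (hA n).1 (norm_nonneg _) ?_)
        exact (ContinuousLinearMap.opNorm_comp_le _ _).trans
          (mul_le_one₀ (hC (xc N n) (xc_nonneg N n) (xc_le N n) _) (norm_nonneg _) h1)
      · rintro ⟨m, s⟩
        filter_upwards [eventually_ge_atTop (2 * m + s + 2)] with n hn
        obtain ⟨h1, h2⟩ := xpowdiff hN s (n - m - 1) (by omega)
        set k := N ^ (n - m - 1 + 1) - 1 - s with hk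
        have hkn : k < N ^ n := (xl_le hN _ _).1 (by omega)
        have hf : xmk e (N ^ n) (xv f N n 1) (e k) = f (m, s) := by
          rw [xmk_apply, if_pos hkn]
          simp only [xv, h1, Nat.cast_one, Real.sqrt_one, inv_one, Complex.ofReal_one, one_smul,
            Finset.range_one, Finset.sum_singleton, add_zero, h2]
          congr 2
          omega
        have h3 : (xmk e (N ^ n) (xv f N n 1)).adjoint (f (m, s)) = e k := by
          rw [← hf, ← ContinuousLinearMap.comp_apply, (hA n).2, hP, if_pos hkn]
        rw [ContinuousLinearMap.comp_apply, ContinuousLinearMap.comp_apply, h3, xmk_apply,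
          if_pos hkn, xc_one N n k (by omega), Complex.ofReal_one, one_smul, hf] }

section Gen
variable (e : HilbertBasis ℕ ℂ H) {N : ℕ} (hN : 2 ≤ N)
    (S : Fin N → H →L[ℂ] H)
    (hS : ∀ (i : Fin N) (r : ℕ), S i (e r) = e (r * N + (i : ℕ)))
    (P : ℕ → H →L[ℂ] H)
    (hP : ∀ n k : ℕ, P n (e k) = if k < n then e k else 0)
    (f : HilbertBasis (ℕ × ℕ) ℂ H2)
    (Sg : Fin N → H2 →L[ℂ] H2)
    (hSg : ∀ (i : Fin N) (m r : ℕ),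
      Sg i (f (m, r)) = if m = 0 then 0 else f (m - 1, r * N + (i : ℕ)))

include hN hS in
lemma xS_adj (i : Fin N) (k : ℕ) : star (S i) (e k) = if k % N = i then e (k / N) else 0 := by
  refine xvec e _ _ fun j => ?_
  rw [ContinuousLinearMap.star_eq_adjoint, ContinuousLinearMap.adjoint_inner_right, hS, xinner]
  have hd := xdiv i.2 j k
  by_cases h : k % N = i
  · rw [if_pos h, xinner]
    simp only [hd, h, true_and]
  · rw [if_neg h, inner_zero_right, if_neg]
    intro hh
    exact h (hd.1 hh).1

include hN hS in
lemma xg_apply (i : Fin N) (n k : ℕ) :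
    xcmp e P hP N (S i) n (e k) = if k * N + i < N ^ n then e (k * N + i) else 0 := by
  rw [xcmp_apply, mul_apply_eq_comp, mul_apply_eq_comp, hP]
  by_cases h : k < N ^ n
  · rw [if_pos h, hS, hP]
  · rw [if_neg h, if_neg]
    · simp
    · have : k * 2 ≤ k * N := Nat.mul_le_mul_left _ hN
      omega

include hN hS in
lemma xgs_apply (i : Fin N) (n k : ℕ) :
    xcmp e P hP N (star (S i)) n (e k)
      = if k < N ^ n then (if k % N = i then e (k / N) else 0) else 0 := by
  rw [xcmp_apply, mul_apply_eq_comp, mul_apply_eq_comp, hP]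
  by_cases h : k < N ^ n
  · rw [if_pos h, if_pos h, xS_adj e hN S hS]
    split_ifs
    · rw [hP, if_pos (lt_of_le_of_lt (Nat.div_le_self _ _) h)]
    · simp
  · rw [if_neg h, if_neg h]; simp

lemma xlim : Tendsto (fun n : ℕ => 2 * (√((n / 2 + 1 : ℕ) : ℝ))⁻¹) atTop (𝓝 0) := by
  have h1 : Tendsto (fun n : ℕ => n / 2 + 1) atTop atTop :=
    tendsto_atTop_mono (f := fun n => n / 2) (fun n => by omega)
      (Nat.tendsto_div_const_atTop (by norm_num))
  have h2 : Tendsto (fun n : ℕ => ((n / 2 + 1 : ℕ) : ℝ)) atTop atTop :=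
    tendsto_natCast_atTop_atTop.comp h1
  have h3 := (Real.tendsto_sqrt_atTop.comp h2).inv_tendsto_atTop.const_mul 2
  rw [mul_zero] at h3
  exact h3

lemma xlim2 : Tendsto (fun n : ℕ => 1 / ((n / 2 + 1 : ℕ) : ℝ)) atTop (𝓝 0) := by
  have h1 : Tendsto (fun n : ℕ => n / 2 + 1) atTop atTop :=
    tendsto_atTop_mono (f := fun n => n / 2) (fun n => by omega)
      (Nat.tendsto_div_const_atTop (by norm_num))
  have h2 : Tendsto (fun n : ℕ => ((n / 2 + 1 : ℕ) : ℝ)) atTop atTop :=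
    tendsto_natCast_atTop_atTop.comp h1
  simp only [one_div]
  exact h2.inv_tendsto_atTop

include hN hS hSg

lemma xfA (i : Fin N) : XAsy (xdat e P hP f N hN).A (xdat e P hP f N hN).C
    (xcmp e P hP N (S i)) (Sg (Fin.rev i)) := by
  refine tendsto_const_nhds.congr fun n => ?_
  symm
  refine xext e _ _ fun k => ?_
  change (Sg (Fin.rev i) ∘L xmk e (N ^ n) (xv f N n 1) - xmk e (N ^ n) (xv f N n 1) ∘L
    xcmp e P hP N (S i) n) (xmk e (N ^ n) (fun k => (xc N n k : ℂ) • e k) (e k)) = 0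
  rw [xmk_apply]
  by_cases hk : k < N ^ n
  swap
  · rw [if_neg hk, map_zero]
  rw [if_pos hk, map_smul]
  by_cases hk0 : k = 0
  · rw [hk0, xc_zero]; simp
  have hne : k * N + i ≠ 0 := by
    have : 0 < k * N := Nat.mul_pos (by omega) (by omega)
    omega
  have hl := xl_succ hN k i i.2 hne
  have hln := (xl_le hN _ _).2 hk
  have hiff := xl_le hN (k * N + i) n
  rw [_root_.sub_apply, ContinuousLinearMap.comp_apply, ContinuousLinearMap.comp_apply,
    xg_apply e hN S hS P hP, xmk_apply, if_pos hk]
  by_cases h : xl N k = n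
  · rw [if_neg (by rw [← hiff]; omega), map_zero, sub_zero]
    have := xV2 f hN Sg hSg (Fin.rev i) k
    rw [h] at this
    rw [this, smul_zero]
  · have h2 : k * N + i < N ^ n := by rw [← hiff]; omega
    rw [if_pos h2, xmk_apply, if_pos h2, xV1 f hN Sg hSg i n 1 k (by omega) hne, sub_self,
      smul_zero]

lemma xfAs (i : Fin N) : XAsy (xdat e P hP f N hN).A (xdat e P hP f N hN).C
    (xcmp e P hP N (star (S i))) (star (Sg (Fin.rev i))) := by
  refine tendsto_const_nhds.congr fun n => ?_
  symm
  refine xext e _ _ fun k => ?_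
  change (star (Sg (Fin.rev i)) ∘L xmk e (N ^ n) (xv f N n 1) - xmk e (N ^ n) (xv f N n 1) ∘L
    xcmp e P hP N (star (S i)) n) (xmk e (N ^ n) (fun k => (xc N n k : ℂ) • e k) (e k)) = 0
  rw [xmk_apply]
  by_cases hk : k < N ^ n
  swap
  · rw [if_neg hk, map_zero]
  rw [if_pos hk, map_smul]
  by_cases hk0 : k = 0
  · rw [hk0, xc_zero]; simp
  have hln := (xl_le hN _ _).2 hk
  rw [_root_.sub_apply, ContinuousLinearMap.comp_apply, ContinuousLinearMap.comp_apply,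
    xgs_apply e hN S hS P hP, xmk_apply, if_pos hk, if_pos hk,
    xV4 f hN Sg hSg i n 1 k (by omega) hk0]
  split_ifs
  · rw [xmk_apply, if_pos (lt_of_le_of_lt (Nat.div_le_self _ _) hk), sub_self, smul_zero]
  · simp

lemma xfB (i : Fin N) : XAsy (xdat e P hP f N hN).B (xdat e P hP f N hN).D
    (xcmp e P hP N (S i)) (Sg (Fin.rev i)) := by
  refine squeeze_zero_norm' ?_ xlim
  filter_upwards [eventually_ge_atTop 2] with n hn
  have key : ∀ k, ((Sg (Fin.rev i) ∘L (xdat e P hP f N hN).B n - (xdat e P hP f N hN).B n ∘L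
    xcmp e P hP N (S i) n) ∘L (xdat e P hP f N hN).D n) (e k) =
    (Sg (Fin.rev i) ∘L xmk e (N ^ n) (xv f N (2 * n + 1) (n / 2 + 1)) -
      xmk e (N ^ n) (xv f N (2 * n + 1) (n / 2 + 1)) ∘L
    xcmp e P hP N (S i) n)
      (xmk e (N ^ n) (fun k => ((1 - xc N n k : ℝ) : ℂ) • e k) (e k)) := fun k => rfl
  have hne0 : ∀ k, k < N ^ n → k * N + i ≠ 0 →
    (Sg (Fin.rev i) ∘L xmk e (N ^ n) (xv f N (2 * n + 1) (n / 2 + 1)) -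
      xmk e (N ^ n) (xv f N (2 * n + 1) (n / 2 + 1)) ∘L
    xcmp e P hP N (S i) n)
      (xmk e (N ^ n) (fun k => ((1 - xc N n k : ℝ) : ℂ) • e k) (e k)) = 0 := by
    intro k hk hne
    rw [xmk_apply, if_pos hk, map_smul]
    have hl := xl_succ hN k i i.2 hne
    have hln := (xl_le hN _ _).2 hk
    have hiff := xl_le hN (k * N + i) n
    by_cases h : xl N k = n
    · rw [xc_one N n k (by omega)]; simp
    have h2 : k * N + i < N ^ n := by rw [← hiff]; omega
    rw [_root_.sub_apply, ContinuousLinearMap.comp_apply, ContinuousLinearMap.comp_apply,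
      xg_apply e hN S hS P hP, xmk_apply, if_pos hk]
    rw [if_pos h2, xmk_apply, if_pos h2, xV1 f hN Sg hSg i _ _ k (by omega) hne, sub_self,
      smul_zero]
  refine xorth0 e _ _ (by positivity) ?_ ?_
  · intro k hk0
    rw [key]
    by_cases hk : k < N ^ n
    swap
    · rw [xmk_apply, if_neg hk, map_zero]
    refine hne0 k hk ?_
    have : 0 < k * N := Nat.mul_pos (by omega) (by omega)
    omega
  · rw [key]
    have hpos : 0 < N ^ n := by positivity
    by_cases hi : (i : ℕ) = 0
    · rw [xmk_apply, if_pos hpos, map_smul, xc_zero, sub_zero, Complex.ofReal_one, one_smul,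
        _root_.sub_apply, ContinuousLinearMap.comp_apply, ContinuousLinearMap.comp_apply,
        xg_apply e hN S hS P hP, xmk_apply, if_pos hpos, hi, zero_mul, zero_add, if_pos hpos,
        xmk_apply, if_pos hpos]
      exact xV3 f hN Sg hSg i hi _ _ (by omega)
    · rw [hne0 0 hpos (by omega), norm_zero]; positivity

lemma xfBs (i : Fin N) : XAsy (xdat e P hP f N hN).B (xdat e P hP f N hN).D
    (xcmp e P hP N (star (S i))) (star (Sg (Fin.rev i))) := by
  refine squeeze_zero_norm' ?_ xlim
  filter_upwards [eventually_ge_atTop 2] with n hn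
  have key : ∀ k, ((star (Sg (Fin.rev i)) ∘L (xdat e P hP f N hN).B n -
    (xdat e P hP f N hN).B n ∘L
    xcmp e P hP N (star (S i)) n) ∘L (xdat e P hP f N hN).D n) (e k) =
    (star (Sg (Fin.rev i)) ∘L xmk e (N ^ n) (xv f N (2 * n + 1) (n / 2 + 1)) -
      xmk e (N ^ n) (xv f N (2 * n + 1) (n / 2 + 1)) ∘L
    xcmp e P hP N (star (S i)) n)
      (xmk e (N ^ n) (fun k => ((1 - xc N n k : ℝ) : ℂ) • e k) (e k)) := fun k => rfl
  refine xorth0 e _ _ (by positivity) ?_ ?_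
  · intro k hk0
    rw [key, xmk_apply]
    by_cases hk : k < N ^ n
    swap
    · rw [if_neg hk, map_zero]
    have hln := (xl_le hN _ _).2 hk
    rw [if_pos hk, map_smul]
    rw [_root_.sub_apply, ContinuousLinearMap.comp_apply, ContinuousLinearMap.comp_apply,
      xgs_apply e hN S hS P hP, xmk_apply, if_pos hk, if_pos hk,
      xV4 f hN Sg hSg i _ _ k (by omega) hk0]
    split_ifs
    · rw [xmk_apply, if_pos (lt_of_le_of_lt (Nat.div_le_self _ _) hk), sub_self, smul_zero]
    · simp
  · have hpos : 0 < N ^ n := by positivity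
    rw [key, xmk_apply, if_pos hpos, map_smul, xc_zero, sub_zero, Complex.ofReal_one, one_smul,
        _root_.sub_apply, ContinuousLinearMap.comp_apply, ContinuousLinearMap.comp_apply,
        xgs_apply e hN S hS P hP, xmk_apply, if_pos hpos, if_pos hpos, Nat.zero_mod, Nat.zero_div]
    have h5 := xV5 f hN Sg hSg i (2 * n + 1) (n / 2 + 1) (by omega)
    by_cases hi : (i : ℕ) = 0
    · rw [if_pos hi.symm, xmk_apply, if_pos hpos]
      rwa [if_pos hi] at h5
    · rw [if_neg (fun h => hi h.symm), map_zero]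
      rwa [if_neg hi] at h5

omit hSg in
lemma xfC (i : Fin N) : XCom (xdat e P hP f N hN).C (xcmp e P hP N (S i)) := by
  refine squeeze_zero_norm ?_ xlim2
  intro n
  have key : ∀ k, (xcmp e P hP N (S i) n ∘L (xdat e P hP f N hN).C n -
      (xdat e P hP f N hN).C n ∘L xcmp e P hP N (S i) n) (e k) =
      if k * N + i < N ^ n then ((xc N n k - xc N n (k * N + i) : ℝ) : ℂ) • e (k * N + i)
        else 0 := by
    intro k
    change xcmp e P hP N (S i) n (xmk e (N ^ n) (fun k => (xc N n k : ℂ) • e k) (e k)) -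
      xmk e (N ^ n) (fun k => (xc N n k : ℂ) • e k) (xcmp e P hP N (S i) n (e k)) = _
    rw [xg_apply e hN S hS P hP, xmk_apply]
    by_cases h : k * N + i < N ^ n
    · have hk : k < N ^ n := by
        have : k * 1 ≤ k * N := Nat.mul_le_mul_left _ (by omega)
        omega
      rw [if_pos h, if_pos h, if_pos hk, map_smul, xg_apply e hN S hS P hP, if_pos h, xmk_apply,
        if_pos h, ← sub_smul, Complex.ofReal_sub]
    · rw [if_neg h, if_neg h, map_zero, sub_zero]
      split_ifs
      · rw [map_smul, xg_apply e hN S hS P hP, if_neg h, smul_zero]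
      · simp
  refine xorth e _ _ (by positivity) ?_ ?_
  · intro j k hjk
    rw [key, key]
    have : j * N + i ≠ k * N + i := by
      intro h
      exact hjk (Nat.eq_of_mul_eq_mul_right (by omega : 0 < N) (by omega))
    split_ifs
    · rw [inner_smul_left, inner_smul_right, xinner, if_neg this, mul_zero, mul_zero]
    · rw [inner_zero_right]
    · rw [inner_zero_left]
    · rw [inner_zero_left]
  · intro k
    rw [key]
    split_ifs with h
    · rw [norm_smul, e.orthonormal.1, mul_one, Complex.norm_real, Real.norm_eq_abs]
      by_cases h0 : k * N + i = 0
      · have hk0 : k = 0 := by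
          by_contra hc
          have : 0 < k * N := Nat.mul_pos (by omega) (by omega)
          omega
        rw [h0, hk0, sub_self, abs_zero]; positivity
      · exact xc_diff N n k _ (xl_succ hN k i i.2 h0)
    · rw [norm_zero]; positivity

omit hN hS hSg in
lemma xcmp_px (hN : 2 ≤ N) (T : H →L[ℂ] H) (n : ℕ) :
    (xdat e P hP f N hN).P n * xcmp e P hP N T n = xcmp e P hP N T n := by
  change P (N ^ n) * (P (N ^ n) * T * P (N ^ n)) = P (N ^ n) * T * P (N ^ n)
  rw [← mul_assoc, ← mul_assoc, xP_sq e P hP]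

omit hN hS hSg in
lemma xcmp_xp (hN : 2 ≤ N) (T : H →L[ℂ] H) (n : ℕ) :
    xcmp e P hP N T n * (xdat e P hP f N hN).P n = xcmp e P hP N T n := by
  change (P (N ^ n) * T * P (N ^ n)) * P (N ^ n) = P (N ^ n) * T * P (N ^ n)
  rw [mul_assoc, xP_sq e P hP]

omit hN hS hSg in
lemma xCtoD {d : XDat H H2} {x : ℕ →ᵇ (H →L[ℂ] H)} (px : ∀ n, d.P n * x n = x n)
    (xp : ∀ n, x n * d.P n = x n) (h : XCom d.C x) : XCom d.D x := by
  have := Tendsto.neg h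
  rw [neg_zero] at this
  refine this.congr fun n => ?_
  change -(x n * d.C n - d.C n * x n) = x n * d.D n - d.D n * x n
  have h1 : d.D n = d.P n - d.C n := by rw [← d.hCD n]; abel
  rw [h1, mul_sub, sub_mul, px, xp]; abel

theorem xgen (i : Fin N) : XRel (xdat e P hP f N hN) (xcmp e P hP N (S i)) (Sg (Fin.rev i)) := by
  have hc := xfC e hN S hS P hP f i
  have hcs := hc.star (xdat e P hP f N hN).hCs
  rw [xcmp_star] at hcs
  refine ⟨⟨xcmp_px e P hP f hN _, xcmp_xp e P hP f hN _, xfA e hN S hS P hP f Sg hSg i,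
    xfB e hN S hS P hP f Sg hSg i, hc,
    xCtoD (xcmp_px e P hP f hN _) (xcmp_xp e P hP f hN _) hc⟩, ?_⟩
  rw [xcmp_star]
  exact ⟨xcmp_px e P hP f hN _, xcmp_xp e P hP f hN _, xfAs e hN S hS P hP f Sg hSg i,
    xfBs e hN S hS P hP f Sg hSg i, hcs,
    xCtoD (xcmp_px e P hP f hN _) (xcmp_xp e P hP f hN _) hcs⟩
end Gen
end Conc2

section Conc3
open Filter Topology BoundedContinuousFunction
set_option linter.unusedSectionVars false

variable {H : Type*} [NormedAddCommGroup H] [InnerProductSpace ℂ H]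
    [CompleteSpace H] {H2 : Type*} [NormedAddCommGroup H2] [InnerProductSpace ℂ H2]
    [CompleteSpace H2]

section Lin
variable (e : HilbertBasis ℕ ℂ H) (P : ℕ → H →L[ℂ] H)
    (hP : ∀ n k : ℕ, P n (e k) = if k < n then e k else 0) (N : ℕ)

lemma xcmp_add (T U : H →L[ℂ] H) :
    xcmp e P hP N (T + U) = xcmp e P hP N T + xcmp e P hP N U := by
  ext1 n
  change P (N ^ n) * (T + U) * P (N ^ n) = P (N ^ n) * T * P (N ^ n) + P (N ^ n) * U * P (N ^ n)
  rw [mul_add, add_mul]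

lemma xcmp_smul (c : ℂ) (T : H →L[ℂ] H) :
    xcmp e P hP N (c • T) = c • xcmp e P hP N T := by
  ext1 n
  change P (N ^ n) * (c • T) * P (N ^ n) = c • (P (N ^ n) * T * P (N ^ n))
  rw [mul_smul_comm, smul_mul_assoc]

lemma xcmp_norm (T : H →L[ℂ] H) : ‖xcmp e P hP N T‖ ≤ ‖T‖ := by
  unfold xcmp ofNormedAddCommGroupDiscrete
  exact norm_ofNormedAddCommGroup_le _ (norm_nonneg _) _

/-- linear version of the compression map -/
noncomputable def xcmpL : (H →L[ℂ] H) →ₗ[ℂ] (ℕ →ᵇ (H →L[ℂ] H)) where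
  toFun := xcmp e P hP N
  map_add' := xcmp_add e P hP N
  map_smul' := xcmp_smul e P hP N

lemma xcmp_cont : Continuous (xcmp e P hP N) :=
  ((xcmpL e P hP N).mkContinuous 1 (fun T => by
    rw [one_mul]; exact xcmp_norm e P hP N T)).continuous

include hP in
lemma xP_zero : P 0 = 0 := xext e _ _ fun k => by rw [hP]; simp
end Lin

section Alg
variable (e : HilbertBasis ℕ ℂ H) {N : ℕ} (hN : 2 ≤ N)
    (S : Fin N → H →L[ℂ] H)
    (hS : ∀ (i : Fin N) (r : ℕ), S i (e r) = e (r * N + (i : ℕ)))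
    (P : ℕ → H →L[ℂ] H)
    (hP : ∀ n k : ℕ, P n (e k) = if k < n then e k else 0)
include hN hS

lemma xSS (i j : Fin N) : star (S i) * S j = if i = j then 1 else 0 := by
  refine xext e _ _ fun k => ?_
  rw [mul_apply_eq_comp, hS, xS_adj e hN S hS]
  have h1 : (k * N + (j : ℕ)) % N = j := by
    rw [Nat.mul_comm, Nat.mul_add_mod, Nat.mod_eq_of_lt j.2]
  have h2 : (k * N + (j : ℕ)) / N = k := by
    rw [Nat.mul_comm, Nat.mul_add_div (by omega), Nat.div_eq_of_lt j.2, add_zero]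
  rw [h1, h2]
  by_cases h : i = j
  · rw [if_pos h, if_pos (by rw [h])]; rfl
  · rw [if_neg h, if_neg (fun hh => h (Fin.ext hh.symm))]; rfl

lemma xSum : ∑ i, S i * star (S i) = 1 := by
  refine xext e _ _ fun k => ?_
  rw [_root_.sum_apply]
  have hm : k % N < N := Nat.mod_lt _ (by omega)
  rw [Finset.sum_eq_single (⟨k % N, hm⟩ : Fin N)]
  · rw [mul_apply_eq_comp, xS_adj e hN S hS, if_pos rfl, hS]
    exact congrArg e (Nat.div_add_mod' k N)
  · intro b _ hb
    rw [mul_apply_eq_comp, xS_adj e hN S hS, if_neg, map_zero]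
    intro hh
    exact hb (Fin.ext hh.symm)
  · intro h; exact absurd (Finset.mem_univ _) h

include hP in
lemma xPS (i : Fin N) (n : ℕ) : P (N ^ n) * S i = P (N ^ n) * S i * P (N ^ n) := by
  refine xext e _ _ fun k => ?_
  have := xg_apply e hN S hS P hP i n k
  rw [xcmp_apply] at this
  rw [this, mul_apply_eq_comp, hS, hP]

lemma xcmp_mulL (i : Fin N) (B : H →L[ℂ] H) :
    xcmp e P hP N (S i * B) = xcmp e P hP N (S i) * xcmp e P hP N B := by
  ext1 n
  change P (N ^ n) * (S i * B) * P (N ^ n) =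
    P (N ^ n) * S i * P (N ^ n) * (P (N ^ n) * B * P (N ^ n))
  have h := xPS e hN S hS P hP i n
  rw [← h, ← mul_assoc, ← mul_assoc, ← mul_assoc, ← h]

lemma xcmp_mulR (i : Fin N) (B : H →L[ℂ] H) :
    xcmp e P hP N (B * star (S i)) = xcmp e P hP N B * xcmp e P hP N (star (S i)) := by
  ext1 n
  change P (N ^ n) * (B * star (S i)) * P (N ^ n) =
    P (N ^ n) * B * P (N ^ n) * (P (N ^ n) * star (S i) * P (N ^ n))
  have h := congrArg star (xPS e hN S hS P hP i n)
  simp only [star_mul, xP_star e P hP] at h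
  rw [mul_assoc (P (N ^ n)) (star (S i)) (P (N ^ n)), mul_assoc (P (N ^ n) * B),
    ← mul_assoc (P (N ^ n)) (P (N ^ n)), xP_sq e P hP, ← h]
  simp only [mul_assoc]

/-- monomials -/
inductive XMon (S : Fin N → H →L[ℂ] H) : (H →L[ℂ] H) → Prop
  | one : XMon S 1
  | left (i B) : XMon S B → XMon S (S i * B)
  | right (i B) : XMon S B → XMon S (B * star (S i))

lemma xmon_adj (j : Fin N) (B : H →L[ℂ] H) (hB : XMon S B) :
    star (S j) * B ∈ Submodule.span ℂ {B | XMon S B} := by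
  induction hB with
  | one =>
    rw [mul_one, ← one_mul (star (S j))]
    exact Submodule.subset_span (XMon.right j 1 XMon.one)
  | left i B hB ih =>
    rw [← mul_assoc, xSS e hN S hS]
    split_ifs
    · rw [one_mul]; exact Submodule.subset_span hB
    · rw [zero_mul]; exact Submodule.zero_mem _
  | right i B hB ih =>
    rw [← mul_assoc]
    have : Submodule.span ℂ {B | XMon S B} ≤
      (Submodule.span ℂ {B | XMon S B}).comap (LinearMap.mulRight ℂ (star (S i))) :=
      Submodule.span_le.2 fun B hB => Submodule.subset_span (XMon.right i B hB)
    exact this ih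

lemma xmon_mulS (j : Fin N) (B : H →L[ℂ] H) (hB : B ∈ Submodule.span ℂ {B | XMon S B}) :
    S j * B ∈ Submodule.span ℂ {B | XMon S B} := by
  have : Submodule.span ℂ {B | XMon S B} ≤
      (Submodule.span ℂ {B | XMon S B}).comap (LinearMap.mulLeft ℂ (S j)) :=
      Submodule.span_le.2 fun B hB => Submodule.subset_span (XMon.left j B hB)
  exact this hB

lemma xmon_mulSs (j : Fin N) (B : H →L[ℂ] H) (hB : B ∈ Submodule.span ℂ {B | XMon S B}) :
    star (S j) * B ∈ Submodule.span ℂ {B | XMon S B} := by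
  have : Submodule.span ℂ {B | XMon S B} ≤
      (Submodule.span ℂ {B | XMon S B}).comap (LinearMap.mulLeft ℂ (star (S j))) :=
      Submodule.span_le.2 fun B hB => xmon_adj e hN S hS j B hB
  exact this hB

lemma xadj_span (A : H →L[ℂ] H) (hA : A ∈ NonUnitalStarAlgebra.adjoin ℂ (Set.range S)) :
    A ∈ Submodule.span ℂ {B | XMon S B} := by
  have key : ∀ B ∈ Submodule.span ℂ {B | XMon S B},
      A * B ∈ Submodule.span ℂ {B | XMon S B} ∧ star A * B ∈ Submodule.span ℂ {B | XMon S B} := by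
    induction hA using NonUnitalStarAlgebra.adjoin_induction with
    | mem x hx =>
      obtain ⟨j, rfl⟩ := hx
      exact fun B hB => ⟨xmon_mulS e hN S hS j B hB, xmon_mulSs e hN S hS j B hB⟩
    | add x y _ _ h1 h2 =>
      intro B hB
      rw [star_add, add_mul, add_mul]
      exact ⟨add_mem (h1 B hB).1 (h2 B hB).1, add_mem (h1 B hB).2 (h2 B hB).2⟩
    | zero => intro B hB; simp
    | mul x y _ _ h1 h2 =>
      intro B hB
      rw [star_mul, mul_assoc, mul_assoc]
      exact ⟨(h1 _ (h2 B hB).1).1, (h2 _ (h1 B hB).2).2⟩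
    | smul c x _ h =>
      intro B hB
      rw [star_smul, smul_mul_assoc, smul_mul_assoc]
      exact ⟨Submodule.smul_mem _ _ (h B hB).1, Submodule.smul_mem _ _ (h B hB).2⟩
    | star x _ h =>
      intro B hB
      rw [star_star]
      exact ⟨(h B hB).2, (h B hB).1⟩
  have := (key 1 (Submodule.subset_span XMon.one)).1
  rwa [mul_one] at this

theorem xsub (Y : NonUnitalStarSubalgebra ℂ (ℕ →ᵇ (H →L[ℂ] H)))
    (hY : IsClosed (Y : Set (ℕ →ᵇ (H →L[ℂ] H))))
    (hg : ∀ i, xcmp e P hP N (S i) ∈ Y) : Seta S P ≤ Y := by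
  have hgs : ∀ i, xcmp e P hP N (star (S i)) ∈ Y := fun i => by
    rw [← xcmp_star]; exact star_mem (hg i)
  have h1 : xcmp e P hP N 1 ∈ Y := by
    rw [← xSum e hN S hS]
    have : xcmp e P hP N (∑ i, S i * star (S i)) =
        ∑ i, xcmp e P hP N (S i) * xcmp e P hP N (star (S i)) := by
      change xcmpL e P hP N _ = _
      rw [map_sum]
      exact Finset.sum_congr rfl fun i _ => xcmp_mulL e hN S hS P hP i _
    rw [this]
    exact sum_mem fun i _ => mul_mem (hg i) (hgs i)
  have h2 : ∀ B, XMon S B → xcmp e P hP N B ∈ Y := by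
    intro B hB
    induction hB with
    | one => exact h1
    | left i B _ ih => rw [xcmp_mulL e hN S hS P hP]; exact mul_mem (hg i) ih
    | right i B _ ih => rw [xcmp_mulR e hN S hS P hP]; exact mul_mem ih (hgs i)
  have h3 : ∀ B ∈ Submodule.span ℂ {B | XMon S B}, xcmp e P hP N B ∈ Y := by
    intro B hB
    induction hB using Submodule.span_induction with
    | mem B hB => exact h2 B hB
    | zero =>
      have : xcmp e P hP N 0 = 0 := (xcmpL e P hP N).map_zero
      rw [this]; exact zero_mem _
    | add u v _ _ hu hv => rw [xcmp_add]; exact add_mem hu hv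
    | smul c u _ hu => rw [xcmp_smul]; exact SMulMemClass.smul_mem c hu
  have h4 : ∀ A ∈ (NonUnitalStarAlgebra.adjoin ℂ (Set.range S)).topologicalClosure,
      xcmp e P hP N A ∈ Y := by
    intro A hA
    have hcl := hY.preimage (xcmp_cont e P hP N)
    have hA' : A ∈ closure ((NonUnitalStarAlgebra.adjoin ℂ (Set.range S)) :
      Set (H →L[ℂ] H)) := hA
    exact hcl.closure_subset_iff.2 (fun B hB => h3 B (xadj_span e hN S hS B hB)) hA'
  refine NonUnitalStarSubalgebra.topologicalClosure_minimal _ ?_ hY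
  refine NonUnitalStarAlgebra.adjoin_le ?_
  rintro g ⟨A, hA, hgA⟩
  have : g = xcmp e P hP N A := by
    ext1 n
    rw [hgA, xcmp_apply]
  rw [this]
  exact h4 A hA

omit hN hS in
lemma xcmp_mem (A : H →L[ℂ] H)
    (hA : A ∈ NonUnitalStarAlgebra.adjoin ℂ (Set.range S)) : xcmp e P hP N A ∈ Seta S P := by
  refine NonUnitalStarSubalgebra.le_topologicalClosure _ (NonUnitalStarAlgebra.subset_adjoin ℂ _ ?_)
  exact ⟨A, NonUnitalStarSubalgebra.le_topologicalClosure _ hA, fun n => rfl⟩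

lemma xconj (i : Fin N) (n J J' : ℕ) (hJ : J ≤ N ^ n) (h : ∀ k, k * N + i < J ↔ k < J') :
    xcmp e P hP N (star (S i)) n * P J * xcmp e P hP N (S i) n = P J' := by
  refine xext e _ _ fun k => ?_
  rw [mul_apply_eq_comp, mul_apply_eq_comp, xg_apply e hN S hS P hP, hP J' k]
  have hk := h k
  by_cases h1 : k * N + i < J
  · rw [if_pos (by omega), hP, if_pos h1, xgs_apply e hN S hS P hP, if_pos (by omega),
      if_pos (hk.1 h1)]
    have hd := (xdiv i.2 k (k * N + i)).1 rfl
    rw [if_pos hd.1, ← hd.2]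
  · rw [if_neg (fun hh => h1 (hk.2 hh))]
    split_ifs
    · rw [hP, if_neg h1, map_zero]
    · simp

lemma xpsi (n J : ℕ) (hJ : J ≤ N ^ n) :
    ∑ i, xcmp e P hP N (S i) n * P J * xcmp e P hP N (star (S i)) n = P (min (J * N) (N ^ n)) := by
  refine xext e _ _ fun k => ?_
  rw [_root_.sum_apply, hP]
  have hm : k % N < N := Nat.mod_lt _ (by omega)
  have hdl : k / N < J ↔ k < J * N := Nat.div_lt_iff_lt_mul (by omega)
  rw [Finset.sum_eq_single (⟨k % N, hm⟩ : Fin N)]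
  · rw [mul_apply_eq_comp, mul_apply_eq_comp, xgs_apply e hN S hS P hP, if_pos rfl]
    by_cases h1 : k < N ^ n
    · rw [if_pos h1, hP]
      by_cases h2 : k / N < J
      · have h3 : k / N * N + (⟨k % N, hm⟩ : Fin N) = k := Nat.div_add_mod' k N
        rw [if_pos h2, xg_apply e hN S hS P hP, h3, if_pos h1, if_pos]
        exact lt_min (hdl.1 h2) h1
      · rw [if_neg h2, map_zero, if_neg]
        intro h
        exact h2 (hdl.2 (lt_min_iff.1 h).1)
    · rw [if_neg h1, map_zero, map_zero, if_neg]
      intro h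
      exact h1 (lt_min_iff.1 h).2
  · intro b _ hb
    rw [mul_apply_eq_comp, mul_apply_eq_comp, xgs_apply e hN S hS P hP,
      if_neg (show ¬ k % N = b from fun hh => hb (Fin.ext hh.symm))]
    simp
  · intro h; exact absurd (Finset.mem_univ _) h

omit hS in
lemma xar0 (m k : ℕ) : k * N + 0 < N ^ m ↔ k < N ^ (m - 1) := by
  rcases m with _ | m
  · simp
    omega
  · rw [pow_succ, Nat.add_sub_cancel, add_zero]
    exact Nat.mul_lt_mul_right (by omega)

omit hS in
lemma xar1 (m k : ℕ) : k * N + 1 < N ^ (m + 1) ↔ k < N ^ m := by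
  rw [pow_succ]
  constructor
  · intro h
    exact (Nat.mul_lt_mul_right (by omega : 0 < N)).1 (by omega)
  · intro h
    have : (k + 1) * N ≤ N ^ m * N := Nat.mul_le_mul_right _ h
    rw [add_mul] at this
    omega

theorem xcut (X : NonUnitalStarSubalgebra ℂ (ℕ →ᵇ (H →L[ℂ] H)))
    (hg : ∀ i, xcmp e P hP N (S i) ∈ X) (h1 : xcmp e P hP N 1 ∈ X) (r : ℕ) :
    ∃ q ∈ X, (∀ n < r, q n = 0) ∧ ∀ n, r ≤ n → q n = P (N ^ n) := by
  have hgs : ∀ i, xcmp e P hP N (star (S i)) ∈ X := fun i => by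
    rw [← xcmp_star]; exact star_mem (hg i)
  have h1a : ∀ n, xcmp e P hP N 1 n = P (N ^ n) := fun n => by
    rw [xcmp_apply, mul_one, xP_sq e P hP]
  have hle : ∀ n m, N ^ (n - m) ≤ N ^ n := fun n m => Nat.pow_le_pow_right (by omega) (by omega)
  have ha : ∀ r : ℕ, ∃ y ∈ X, ∀ n, y n = P (N ^ (n - r)) := by
    intro r
    induction r with
    | zero => exact ⟨_, h1, h1a⟩
    | succ r ih =>
      obtain ⟨y, hy, hyn⟩ := ih
      refine ⟨xcmp e P hP N (star (S ⟨0, by omega⟩)) * y * xcmp e P hP N (S ⟨0, by omega⟩),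
        mul_mem (mul_mem (hgs _) hy) (hg _), fun n => ?_⟩
      change xcmp e P hP N (star (S ⟨0, by omega⟩)) n * y n * xcmp e P hP N (S ⟨0, by omega⟩) n = _
      rw [hyn]
      exact xconj e hN S hS P hP _ n _ _ (hle _ _) fun k => xar0 hN (n - r) k
  have hb : ∀ r : ℕ, ∃ y ∈ X, ∀ n, y n = P (if r ≤ n then N ^ (n - r) else 0) := by
    intro r
    induction r with
    | zero => exact ⟨_, h1, h1a⟩
    | succ r ih =>
      obtain ⟨y, hy, hyn⟩ := ih
      refine ⟨xcmp e P hP N (star (S ⟨1, by omega⟩)) * y * xcmp e P hP N (S ⟨1, by omega⟩),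
        mul_mem (mul_mem (hgs _) hy) (hg _), fun n => ?_⟩
      change xcmp e P hP N (star (S ⟨1, by omega⟩)) n * y n * xcmp e P hP N (S ⟨1, by omega⟩) n = _
      rw [hyn]
      refine xconj e hN S hS P hP _ n _ _ ?_ fun k => ?_
      · split_ifs
        · exact hle _ _
        · exact Nat.zero_le _
      · change k * N + 1 < _ ↔ _
        by_cases h : r + 1 ≤ n
        · rw [if_pos (by omega), if_pos h]
          have : n - r = (n - (r + 1)) + 1 := by omega
          rw [this]
          exact xar1 hN _ k
        · rw [if_neg h]
          by_cases h' : r ≤ n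
          · rw [if_pos h', show n - r = 0 by omega, pow_zero]; omega
          · rw [if_neg h']; omega
  have hc : ∀ j : ℕ, ∃ y ∈ X, ∀ n, y n = P (if n < r then min (N ^ j) (N ^ n) else 0) := by
    intro j
    induction j with
    | zero =>
      obtain ⟨y, hy, hyn⟩ := ha r
      obtain ⟨z, hz, hzn⟩ := hb r
      refine ⟨y - z, sub_mem hy hz, fun n => ?_⟩
      change y n - z n = _
      rw [hyn, hzn]
      by_cases h : n < r
      · rw [if_pos h, if_neg (by omega), xP_zero e P hP, sub_zero, show n - r = 0 by omega,
          pow_zero, min_eq_left (Nat.one_le_pow _ _ (by omega))]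
      · rw [if_neg h, if_pos (by omega), xP_zero e P hP, sub_self]
    | succ j ih =>
      obtain ⟨y, hy, hyn⟩ := ih
      refine ⟨∑ i, xcmp e P hP N (S i) * y * xcmp e P hP N (star (S i)),
        sum_mem fun i _ => mul_mem (mul_mem (hg _) hy) (hgs _), fun n => ?_⟩
      have : (∑ i, xcmp e P hP N (S i) * y * xcmp e P hP N (star (S i))) n =
          ∑ i, xcmp e P hP N (S i) n * y n * xcmp e P hP N (star (S i)) n := by
        rw [BoundedContinuousFunction.sum_apply]; rfl
      rw [this, hyn, xpsi e hN S hS P hP]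
      · congr 1
        split_ifs
        · rw [pow_succ]
          rcases le_total (N ^ j) (N ^ n) with h | h
          · rw [min_eq_left h]
          · have h5 : N ^ n * 1 ≤ N ^ n * N := Nat.mul_le_mul_left _ (by omega)
            have h6 : N ^ n * N ≤ N ^ j * N := Nat.mul_le_mul_right _ h
            rw [min_eq_right h, min_eq_right (by omega), min_eq_right (by omega)]
        · rw [zero_mul]; exact min_eq_left (Nat.zero_le _)
      · split_ifs
        · exact min_le_right _ _
        · exact Nat.zero_le _
  obtain ⟨y, hy, hyn⟩ := hc r
  refine ⟨xcmp e P hP N 1 - y, sub_mem h1 hy, fun n hn => ?_, fun n hn => ?_⟩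
  · change xcmp e P hP N 1 n - y n = 0
    rw [h1a, hyn, if_pos hn, min_eq_right (Nat.pow_le_pow_right (by omega) (by omega)), sub_self]
  · change xcmp e P hP N 1 n - y n = _
    rw [h1a, hyn, if_neg (by omega), xP_zero e P hP, sub_zero]

end Alg
end Conc3


/-- There is a *-homomorphism `W̃` from `S_η(O_N)` into the bounded
operators on `H̃ = ℓ²(ℤ⁺, ℓ²(ℤ⁺))` (with orthonormal basis `f (m, r)`) such that:
(i) `W̃ ((P_{N^n} S_r P_{N^n})_n) = Σ_{N-1-r}` for every `r ∈ Ω`, where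
`Σ_i f(m,s) = f(m-1, s*N+i)` for `m ≥ 1` and `Σ_i f(0,s) = 0`;
(ii) the kernel of `W̃` is exactly `G_η`, the sequences tending to zero in norm;
(iii) the range of `W̃` is `T_N`, the smallest closed *-subalgebra containing the `Σ_i`. -/
theorem stmt16 {H : Type*} [NormedAddCommGroup H] [InnerProductSpace ℂ H] [CompleteSpace H]
    (e : HilbertBasis ℕ ℂ H) (N : ℕ) (hN : 2 ≤ N)
    (S : Fin N → H →L[ℂ] H)
    (hS : ∀ (i : Fin N) (r : ℕ), S i (e r) = e (r * N + (i : ℕ)))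
    (P : ℕ → H →L[ℂ] H)
    (hP : ∀ n k : ℕ, P n (e k) = if k < n then e k else 0)
    {H2 : Type*} [NormedAddCommGroup H2] [InnerProductSpace ℂ H2] [CompleteSpace H2]
    (f : HilbertBasis (ℕ × ℕ) ℂ H2)
    (Sg : Fin N → H2 →L[ℂ] H2)
    (hSg : ∀ (i : Fin N) (m r : ℕ),
      Sg i (f (m, r)) = if m = 0 then 0 else f (m - 1, r * N + (i : ℕ))) :
    ∃ W : Seta S P →⋆ₙₐ[ℂ] (H2 →L[ℂ] H2),
      (∀ (r : Fin N) (x : ↥(Seta S P)),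
        (∀ n : ℕ, (x : BoundedContinuousFunction ℕ (H →L[ℂ] H)) n
            = P (N ^ n) * S r * P (N ^ n)) →
        W x = Sg (Fin.rev r)) ∧
      (∀ x : ↥(Seta S P),
        W x = 0 ↔ Filter.Tendsto
          (fun n => ‖(x : BoundedContinuousFunction ℕ (H →L[ℂ] H)) n‖)
          Filter.atTop (nhds 0)) ∧
      Set.range W
        = ((NonUnitalStarAlgebra.adjoin ℂ (Set.range Sg)).topologicalClosure :
            Set (H2 →L[ℂ] H2)) := by
  have hg : ∀ i, xcmp e P hP N (S i) ∈ Seta S P := fun i =>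
    xcmp_mem e S P hP _ (NonUnitalStarAlgebra.subset_adjoin ℂ _ ⟨i, rfl⟩)
  have h1 : xcmp e P hP N 1 ∈ Seta S P := by
    refine xcmp_mem e S P hP _ ?_
    rw [← xSum e hN S hS]
    refine sum_mem fun i _ => mul_mem ?_ (star_mem ?_) <;>
      exact NonUnitalStarAlgebra.subset_adjoin ℂ _ ⟨i, rfl⟩
  have hr : Set.range (fun i => Sg (Fin.rev i)) = Set.range Sg :=
    Fin.rev_surjective.range_comp Sg
  have hR : ∀ i, XRel (xdat e P hP f N hN) (xcmp e P hP N (S i)) (Sg (Fin.rev i)) :=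
    xgen e hN S hS P hP f Sg hSg
  have hclT := NonUnitalStarSubalgebra.isClosed_topologicalClosure
    (NonUnitalStarAlgebra.adjoin ℂ (Set.range Sg))
  obtain ⟨W, hW1, hW2, hW3⟩ := xmain (xdat e P hP f N hN) (Seta S P)
    (NonUnitalStarSubalgebra.isClosed_topologicalClosure _)
    (fun i => xcmp e P hP N (S i)) (fun i => Sg (Fin.rev i)) hg hR
    (by
      rw [hr]
      refine xsub e hN S hS P hP _ (xY_closed _ _ hclT) fun i => ?_
      exact ⟨_, NonUnitalStarSubalgebra.le_topologicalClosure _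
        (NonUnitalStarAlgebra.subset_adjoin ℂ _ ⟨Fin.rev i, rfl⟩), hR i⟩)
    (xcut e hN S hS P hP _ hg h1)
  rw [hr] at hW3
  refine ⟨W, fun r x hx => hW1 r x ?_, hW2, hW3⟩
  ext1 n
  rw [hx, xcmp_apply]
end

section
/- Let W̃ be any *-homomorphism from S_η(O_N) into the bounded operators on H̃ such that W̃((P_{N^n}S_rP_{N^n})_{n≥0}) = Σ_{N−1−r} for every r ∈ Ω and the kernel of W̃ is exactly G_η. Then a sequence (A_n) ∈ S_η(O_N) is stable if and only if the operator W̃((A_n)) is invertible. -/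
set_option synthInstance.maxHeartbeats 1000000
set_option maxHeartbeats 1000000

lemma aux_inv {A : Type*} [CStarAlgebra A] {P a B : A} (haP : a * P = a) (hPa : P * a = a)
    (hBP : B * P = B) (hPB : P * B = B) (haB : a * B = P) (hBa : B * a = P)
    {l : ℂ} (hl : l ≠ 0) (hn : ‖l • B‖ < 1) : l ∉ spectrum ℂ a := by
  rw [spectrum.notMem_iff, Algebra.algebraMap_eq_smul_one]
  obtain ⟨u, hu⟩ : IsUnit (1 - l • B) := isUnit_one_sub_of_norm_lt_one hn
  have hPP : P * P = P := by rw [← haB, ← mul_assoc, haB, hPa] <;> simp [haB, hPB]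
  have h1 : P * (1 - l • B) = P - l • B := by simp [mul_sub, hPB]
  have h2 : (1 - l • B) * P = P - l • B := by simp [sub_mul, hBP]
  rw [← hu] at h1 h2
  rw [isUnit_iff_exists_and_exists]
  constructor
  · refine ⟨l⁻¹ • (1 - P) - B * ↑u⁻¹, ?_⟩
    have e1 : (l • (1 : A) - a) * (l⁻¹ • (1 - P)) = 1 - P := by
      rw [mul_smul_comm, mul_sub, mul_one, sub_mul, smul_mul_assoc, one_mul, haP, sub_sub_sub_cancel_right, ← smul_sub, smul_smul, inv_mul_cancel₀ hl, one_smul]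
    have e2 : (l • (1 : A) - a) * B = - (P * u) := by
      rw [h1]; simp [sub_mul, haB]
    rw [mul_sub, e1, ← mul_assoc, e2]
    simp [mul_assoc]
  · refine ⟨l⁻¹ • (1 - P) - ↑u⁻¹ * B, ?_⟩
    have e1 : (l⁻¹ • (1 - P)) * (l • (1 : A) - a) = 1 - P := by
      simp [sub_mul, mul_sub, hPa, smul_smul, hl]
    have e2 : B * (l • (1 : A) - a) = - (u * P) := by
      rw [h2]; simp [mul_sub, hBa]
    rw [sub_mul, e1, mul_assoc, e2]
    simp

noncomputable def gfun (d : ℝ) (t : ℝ) : ℝ := t / max (t ^ 2) (d ^ 2)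

lemma gfun_cont {d : ℝ} (hd : 0 < d) : Continuous (gfun d) := by
  unfold gfun
  refine continuous_id.div (by fun_prop) fun t => ?_
  have : 0 < d ^ 2 := by positivity
  exact (lt_max_of_lt_right this).ne'

lemma gfun_zero (d : ℝ) : gfun d 0 = 0 := by simp [gfun]

lemma aux_cfc {A : Type*} [CStarAlgebra A] {P a B : A} (haP : a * P = a) (hPa : P * a = a)
    (hBP : B * P = B) (hPB : P * B = B) (haB : a * B = P) (hBa : B * a = P)
    (ha : IsSelfAdjoint a) {d : ℝ} (hd : 0 < d) (hB : d * ‖B‖ < 1) :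
    cfcₙ (gfun d) a * a = P := by
  have hc : ContinuousOn (gfun d) (quasispectrum ℝ a) := (gfun_cont hd).continuousOn
  have key : cfcₙ (gfun d) a * a * a = a := by
    have e : cfcₙ (fun t : ℝ => t) a = a := cfcₙ_id' ℝ a
    have h1 : cfcₙ (gfun d) a * a * a = cfcₙ (fun t => gfun d t * t * t) a := by
      rw [cfcₙ_mul (fun t => gfun d t * t) (fun t => t) a
        (hc.mul continuousOn_id) (by simp [gfun_zero]) continuousOn_id rfl,
        cfcₙ_mul (gfun d) (fun t => t) a hc (gfun_zero d) continuousOn_id rfl, e]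
    rw [h1]
    conv_rhs => rw [← e]
    refine cfcₙ_congr fun t ht => ?_
    by_cases h0 : t = 0
    · simp [h0]
    have hdt : d ≤ |t| := by
      by_contra hlt
      push Not at hlt
      rw [quasispectrum_eq_spectrum_union_zero] at ht
      rcases ht with ht | ht
      · have : (t : ℂ) ∈ spectrum ℂ a := by
          have := spectrum.algebraMap_mem (S := ℂ) ht
          simpa using this
        refine aux_inv haP hPa hBP hPB haB hBa (l := (t : ℂ)) (by exact_mod_cast h0) ?_ this
        rw [norm_smul]
        refine lt_of_le_of_lt ?_ hB
        gcongr
        simpa using hlt.le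
      · exact h0 ht
    have : d ^ 2 ≤ t ^ 2 := by
      rw [← sq_abs t]; gcongr
    simp only [gfun, max_eq_left this]
    field_simp
  calc cfcₙ (gfun d) a * a = cfcₙ (gfun d) a * a * P := by rw [mul_assoc, haP]
    _ = cfcₙ (gfun d) a * a * a * B := by rw [← haB]; noncomm_ring
    _ = P := by rw [key, haB]

lemma hb_ext {ι E F : Type*} [NormedAddCommGroup E] [InnerProductSpace ℂ E]
    [NormedAddCommGroup F] [NormedSpace ℂ F]
    (b : HilbertBasis ι ℂ E) {T U : E →L[ℂ] F} (h : ∀ i, T (b i) = U (b i)) : T = U := by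
  refine ContinuousLinearMap.ext_on (s := Set.range b) ?_ ?_
  · exact (Submodule.dense_iff_topologicalClosure_eq_top).2 b.dense_span
  · rintro _ ⟨i, rfl⟩; exact h i

lemma hb_adj {ι E : Type*} [NormedAddCommGroup E] [InnerProductSpace ℂ E] [CompleteSpace E]
    (b : HilbertBasis ι ℂ E) {x y : E} (h : ∀ i, inner ℂ (b i) x = inner ℂ (b i) y) : x = y := by
  apply b.repr.injective
  ext i
  simpa [b.repr_apply_apply] using h i

lemma P_sp {H : Type*} [NormedAddCommGroup H] [InnerProductSpace ℂ H] [CompleteSpace H]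
    (e : HilbertBasis ℕ ℂ H) (P : ℕ → H →L[ℂ] H)
    (hP : ∀ n k : ℕ, P n (e k) = if k < n then e k else 0) (n : ℕ) : IsStarProjection (P n) := by
  constructor
  · refine hb_ext e fun k => ?_
    by_cases h : k < n <;> simp [hP, h]
  · refine hb_ext e fun k => hb_adj e fun j => ?_
    rw [ContinuousLinearMap.star_eq_adjoint, ContinuousLinearMap.adjoint_inner_right, hP, hP]
    have := e.orthonormal
    rw [orthonormal_iff_ite] at this
    by_cases h : k < n <;> by_cases h' : j < n <;> simp [h, h', this] <;> omega

lemma S_sum {H : Type*} [NormedAddCommGroup H] [InnerProductSpace ℂ H] [CompleteSpace H]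
    (e : HilbertBasis ℕ ℂ H) (N : ℕ) (hN : 2 ≤ N)
    (S : Fin N → H →L[ℂ] H)
    (hS : ∀ (i : Fin N) (r : ℕ), S i (e r) = e (r * N + (i : ℕ))) :
    ∑ i, S i * star (S i) = 1 := by
  have ho : ∀ i j, star (S i) * S j = if i = j then 1 else 0 := by
    intro i j
    refine hb_ext e fun k => hb_adj e fun l => ?_
    have ht := e.orthonormal
    rw [orthonormal_iff_ite] at ht
    have : inner ℂ (e l) ((star (S i) * S j) (e k)) = inner ℂ (S i (e l)) (S j (e k)) := by
      rw [ContinuousLinearMap.star_eq_adjoint, mul_apply_eq_comp,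
        ContinuousLinearMap.adjoint_inner_right]
    rw [this, hS, hS, ht]
    by_cases hij : i = j
    · subst hij
      have : N ≠ 0 := by omega
      simp [ht, this]
    · have : l * N + (i : ℕ) ≠ k * N + j := by
        intro h
        apply hij
        have h2 := congrArg (· % N) h
        simp [Nat.mod_eq_of_lt] at h2
        exact Fin.ext h2
      simp [hij, this]
  refine hb_ext e fun k => ?_
  have hk : e k = S ⟨k % N, Nat.mod_lt _ (by omega)⟩ (e (k / N)) := by
    rw [hS]; congr 1; simp [Nat.div_add_mod']
  rw [hk, ← mul_apply_eq_comp, Finset.sum_mul]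
  simp [mul_assoc, ho]

/-- half of the sequences algebra: the corner. -/
noncomputable def cornerAlg {H : Type*} [NormedAddCommGroup H] [InnerProductSpace ℂ H]
    [CompleteSpace H] (Q : ℕ → H →L[ℂ] H) (hQ : ∀ n, star (Q n) = Q n) :
    NonUnitalStarSubalgebra ℂ (BoundedContinuousFunction ℕ (H →L[ℂ] H)) where
  carrier := {g | ∀ n, Q n * g n = g n ∧ g n * Q n = g n}
  add_mem' := by
    intro a b ha hb n
    simp [mul_add, add_mul, ha n, hb n]
  zero_mem' := by intro n; simp
  mul_mem' := by
    intro a b ha hb n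
    simp only [BoundedContinuousFunction.mul_apply]
    rw [← mul_assoc, (ha n).1, mul_assoc, (hb n).2]
    exact ⟨rfl, rfl⟩
  smul_mem' := by
    intro c a ha n
    simp [ha n]
  star_mem' := by
    intro a ha n
    have h1 := congrArg star (ha n).1
    have h2 := congrArg star (ha n).2
    rw [star_mul, hQ] at h1 h2
    exact ⟨h2, h1⟩

lemma corner_closed {H : Type*} [NormedAddCommGroup H] [InnerProductSpace ℂ H]
    [CompleteSpace H] (Q : ℕ → H →L[ℂ] H) (hQ : ∀ n, star (Q n) = Q n) :
    IsClosed (cornerAlg Q hQ : Set (BoundedContinuousFunction ℕ (H →L[ℂ] H))) := by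
  have : (cornerAlg Q hQ : Set (BoundedContinuousFunction ℕ (H →L[ℂ] H))) =
      ⋂ n, ({g | Q n * g n = g n} ∩ {g | g n * Q n = g n}) := by
    ext g
    simp only [Set.mem_iInter, Set.mem_inter_iff, Set.mem_ofPred_eq]
    rfl
  rw [this]
  have hc : ∀ n, Continuous fun g : BoundedContinuousFunction ℕ (H →L[ℂ] H) => g n :=
    fun n => continuous_eval_const n
  refine isClosed_iInter fun n => IsClosed.inter ?_ ?_
  · exact isClosed_eq (continuous_const.mul (hc n)) (hc n)
  · exact isClosed_eq ((hc n).mul continuous_const) (hc n)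

lemma seta_corner {H : Type*} [NormedAddCommGroup H] [InnerProductSpace ℂ H]
    [CompleteSpace H] {N : ℕ} (S : Fin N → H →L[ℂ] H) (P : ℕ → H →L[ℂ] H)
    (hP : ∀ n, IsStarProjection (P n)) (x : Seta S P) (n : ℕ) :
    P (N ^ n) * (x : BoundedContinuousFunction ℕ (H →L[ℂ] H)) n
      = (x : BoundedContinuousFunction ℕ (H →L[ℂ] H)) n ∧
    (x : BoundedContinuousFunction ℕ (H →L[ℂ] H)) n * P (N ^ n)
      = (x : BoundedContinuousFunction ℕ (H →L[ℂ] H)) n := by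
  have h : Seta S P ≤ cornerAlg (fun n => P (N ^ n)) (fun n => (hP _).isSelfAdjoint) := by
    refine NonUnitalStarSubalgebra.topologicalClosure_minimal _ ?_ (corner_closed _ _)
    refine NonUnitalStarAlgebra.adjoin_le ?_
    rintro g ⟨A, -, hg⟩ m
    have := (hP (N ^ m)).isIdempotentElem.eq
    rw [hg]
    constructor
    · rw [← mul_assoc, ← mul_assoc, this]
    · rw [mul_assoc, this]
  exact h x.2 n

noncomputable def comprSeq {H : Type*} [NormedAddCommGroup H] [InnerProductSpace ℂ H]
    [CompleteSpace H] (N : ℕ) (P : ℕ → H →L[ℂ] H)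
    (hP : ∀ n, IsStarProjection (P n)) (A : H →L[ℂ] H) :
    BoundedContinuousFunction ℕ (H →L[ℂ] H) :=
  BoundedContinuousFunction.ofNormedAddCommGroup (fun n => P (N ^ n) * A * P (N ^ n))
    continuous_of_discreteTopology ‖A‖ (by
      intro n
      have h := (hP (N ^ n)).norm_le
      calc _ ≤ ‖P (N ^ n)‖ * ‖A‖ * ‖P (N ^ n)‖ := by
            refine (norm_mul_le _ _).trans ?_
            gcongr
            exact norm_mul_le _ _
        _ ≤ 1 * ‖A‖ * 1 := by gcongr
        _ = ‖A‖ := by simp)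

lemma compr_mem {H : Type*} [NormedAddCommGroup H] [InnerProductSpace ℂ H]
    [CompleteSpace H] {N : ℕ} (S : Fin N → H →L[ℂ] H) (P : ℕ → H →L[ℂ] H)
    (hP : ∀ n, IsStarProjection (P n)) (A : H →L[ℂ] H)
    (hA : A ∈ (NonUnitalStarAlgebra.adjoin ℂ (Set.range S)).topologicalClosure) :
    comprSeq N P hP A ∈ Seta S P :=
  NonUnitalStarSubalgebra.le_topologicalClosure _
    (NonUnitalStarAlgebra.subset_adjoin ℂ _ ⟨A, hA, fun _ => rfl⟩)

instance seta_closed {H : Type*} [NormedAddCommGroup H] [InnerProductSpace ℂ H]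
    [CompleteSpace H] {N : ℕ} (S : Fin N → H →L[ℂ] H) (P : ℕ → H →L[ℂ] H) :
    IsClosed (Seta S P : Set (BoundedContinuousFunction ℕ (H →L[ℂ] H))) :=
  NonUnitalStarSubalgebra.isClosed_topologicalClosure _

noncomputable def evalHom {H : Type*} [NormedAddCommGroup H] [InnerProductSpace ℂ H]
    [CompleteSpace H] {N : ℕ} (S : Fin N → H →L[ℂ] H) (P : ℕ → H →L[ℂ] H) (n : ℕ) :
    Seta S P →⋆ₙₐ[ℂ] (H →L[ℂ] H) where
  toFun x := (x : BoundedContinuousFunction ℕ (H →L[ℂ] H)) n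
  map_smul' _ _ := rfl
  map_zero' := rfl
  map_add' _ _ := rfl
  map_mul' _ _ := rfl
  map_star' _ := rfl

open scoped CStarAlgebra in
lemma map_g {A B : Type*} [NonUnitalCStarAlgebra A] [CStarAlgebra B] (φ : A →⋆ₙₐ[ℂ] B)
    (a : A) (ha : IsSelfAdjoint a) {d : ℝ} (hd : 0 < d) :
    φ (cfcₙ (gfun d) a) = cfcₙ (gfun d) (φ a) :=
  NonUnitalStarAlgHomClass.map_cfcₙ (S := ℂ) φ (gfun d) a (gfun_cont hd).continuousOn (gfun_zero d)
    (map_continuous φ) ha (ha.map φ)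

noncomputable def gy {A : Type*} [NonUnitalCStarAlgebra A] (d : ℝ) (x : A) : A :=
  cfcₙ (gfun d) (star x * x) * star x

/-- left inverse bound: abstract step -/
lemma left_inv_cfc {A B : Type*} [NonUnitalCStarAlgebra A] [CStarAlgebra B] (φ : A →⋆ₙₐ[ℂ] B)
    (x : A) {P b : B} (hPs : star P = P) (hxP : φ x * P = φ x) (hPx : P * φ x = φ x)
    (hbP : b * P = b) (hPb : P * b = b)
    (hxb : φ x * b = P) (hbx : b * φ x = P) {d C : ℝ} (hd : 0 < d) (hb : ‖b‖ ≤ C)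
    (hdC : d * (C * C) < 1) :
    φ (gy d x) * φ x = P := by
  have hsa : IsSelfAdjoint (star x * x) := IsSelfAdjoint.star_mul_self x
  have s1 : P * star (φ x) = star (φ x) := by rw [← hPs, ← star_mul, hxP]
  have s3 : star b * star (φ x) = P := by rw [← star_mul, hxb, hPs]
  have s4 : star (φ x) * star b = P := by rw [← star_mul, hbx, hPs]
  have s5 : star b * P = star b := by
    conv_lhs => rw [← hPs, ← star_mul, hPb]
  have s6 : P * star b = star b := by
    conv_lhs => rw [← hPs, ← star_mul, hbP]
  have := aux_cfc (P := P) (a := φ (star x * x)) (B := b * star b)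
    (by rw [map_mul, mul_assoc, hxP]) (by rw [map_mul, map_star, ← mul_assoc, s1])
    (by rw [mul_assoc, s5]) (by rw [← mul_assoc, hPb])
    (by rw [map_mul, map_star, mul_assoc, ← mul_assoc (φ x), hxb, s6, s4])
    (by rw [map_mul, map_star, mul_assoc, ← mul_assoc (star b), s3, hPx, hbx])
    (hsa.map φ) hd (by
      refine lt_of_le_of_lt ?_ hdC
      gcongr
      refine (norm_mul_le _ _).trans ?_
      rw [norm_star]
      gcongr
      exact (norm_nonneg _).trans hb)
  rw [← map_mul, gy, mul_assoc, map_mul, map_g φ _ hsa hd]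
  exact this

lemma ex_d (C : ℝ) : ∃ d : ℝ, 0 < d ∧ d * (C * C) < 1 := by
  refine ⟨1 / (C * C + 1), by have := mul_self_nonneg C; positivity, ?_⟩
  have := mul_self_nonneg C
  rw [div_mul_eq_mul_div, div_lt_one (by positivity)]
  linarith

def Stab {H : Type*} [NormedAddCommGroup H] [InnerProductSpace ℂ H] [CompleteSpace H]
    (N : ℕ) (P : ℕ → H →L[ℂ] H) (x : BoundedContinuousFunction ℕ (H →L[ℂ] H)) : Prop :=
  ∃ (n₀ : ℕ) (C : ℝ), ∀ n : ℕ, n₀ ≤ n →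
      ∃ B : H →L[ℂ] H, B = P (N ^ n) * B * P (N ^ n) ∧
        x n * B = P (N ^ n) ∧
        B * x n = P (N ^ n) ∧
        ‖B‖ ≤ C

lemma Stab.star {H : Type*} [NormedAddCommGroup H] [InnerProductSpace ℂ H] [CompleteSpace H]
    {N : ℕ} {P : ℕ → H →L[ℂ] H} {x : BoundedContinuousFunction ℕ (H →L[ℂ] H)}
    (hP : ∀ n, IsStarProjection (P n)) (h : Stab N P x) : Stab N P (star x) := by
  obtain ⟨n₀, C, h⟩ := h
  refine ⟨n₀, C, fun n hn => ?_⟩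
  obtain ⟨B, h1, h2, h3, h4⟩ := h n hn
  have hs : Star.star (P (N ^ n)) = P (N ^ n) := (hP _).isSelfAdjoint
  refine ⟨Star.star B, ?_, ?_, ?_, by rwa [norm_star]⟩
  · conv_lhs => rw [h1]
    simp [star_mul, hs, mul_assoc]
  · rw [BoundedContinuousFunction.star_apply, ← star_mul, h3, hs]
  · rw [BoundedContinuousFunction.star_apply, ← star_mul, h2, hs]

lemma stab_left {H : Type*} [NormedAddCommGroup H] [InnerProductSpace ℂ H] [CompleteSpace H]
    {N : ℕ} {S : Fin N → H →L[ℂ] H} {P : ℕ → H →L[ℂ] H}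
    (hP : ∀ n, IsStarProjection (P n))
    {H2 : Type*} [NormedAddCommGroup H2] [InnerProductSpace ℂ H2] [CompleteSpace H2]
    (W : Seta S P →⋆ₙₐ[ℂ] (H2 →L[ℂ] H2))
    (hW2 : ∀ x : ↥(Seta S P),
      W x = 0 ↔ Filter.Tendsto
        (fun n => ‖(x : BoundedContinuousFunction ℕ (H →L[ℂ] H)) n‖)
        Filter.atTop (nhds 0))
    (p : Seta S P) (hp : ∀ n, (p : BoundedContinuousFunction ℕ (H →L[ℂ] H)) n = P (N ^ n))
    (hWp : W p = 1) (x : Seta S P)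
    (h : Stab N P (x : BoundedContinuousFunction ℕ (H →L[ℂ] H))) : ∃ y, W y * W x = 1 := by
  obtain ⟨n₀, C, h⟩ := h
  obtain ⟨d, hd, hdC⟩ := ex_d C
  refine ⟨gy d x, ?_⟩
  rw [← map_mul, ← hWp, ← sub_eq_zero, ← map_sub, hW2]
  refine tendsto_const_nhds.congr' ?_
  filter_upwards [Filter.eventually_ge_atTop n₀] with n hn
  obtain ⟨B, h1, h2, h3, h4⟩ := h n hn
  have hc := seta_corner S P hP x n
  have hPP := (hP (N ^ n)).isIdempotentElem.eq
  have := left_inv_cfc (evalHom S P n) x (P := P (N ^ n)) (b := B)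
    (hP _).isSelfAdjoint hc.2 hc.1 (by rw [h1, mul_assoc, hPP])
    (by rw [h1, ← mul_assoc, ← mul_assoc, hPP]) h2 h3 hd h4 hdC
  symm
  rw [norm_eq_zero]
  change evalHom S P n (gy d x) * evalHom S P n x -
    (p : BoundedContinuousFunction ℕ (H →L[ℂ] H)) n = 0
  rw [this, sub_eq_zero]
  exact (hp n).symm

lemma unit_left {H : Type*} [NormedAddCommGroup H] [InnerProductSpace ℂ H] [CompleteSpace H]
    {N : ℕ} {S : Fin N → H →L[ℂ] H} {P : ℕ → H →L[ℂ] H}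
    {H2 : Type*} [NormedAddCommGroup H2] [InnerProductSpace ℂ H2] [CompleteSpace H2]
    (W : Seta S P →⋆ₙₐ[ℂ] (H2 →L[ℂ] H2))
    (hW2 : ∀ x : ↥(Seta S P),
      W x = 0 ↔ Filter.Tendsto
        (fun n => ‖(x : BoundedContinuousFunction ℕ (H →L[ℂ] H)) n‖)
        Filter.atTop (nhds 0))
    (p : Seta S P) (hp : ∀ n, (p : BoundedContinuousFunction ℕ (H →L[ℂ] H)) n = P (N ^ n))
    (hWp : W p = 1) (x : Seta S P) (h : IsUnit (W x)) :
    ∃ y : Seta S P, ∀ᶠ n in Filter.atTop, ‖P (N ^ n) -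
      (y : BoundedContinuousFunction ℕ (H →L[ℂ] H)) n *
      (x : BoundedContinuousFunction ℕ (H →L[ℂ] H)) n‖ < 1 / 2 := by
  obtain ⟨u, hu⟩ := h
  obtain ⟨d, hd, hdC⟩ := ex_d ‖(↑u⁻¹ : H2 →L[ℂ] H2)‖
  refine ⟨gy d x, ?_⟩
  have := left_inv_cfc W x (P := 1) (b := ↑u⁻¹)
    (star_one _) (mul_one _) (one_mul _) (mul_one _) (one_mul _)
    (by rw [← hu]; simp) (by rw [← hu]; simp) hd le_rfl hdC
  rw [← map_mul, ← hWp, ← sub_eq_zero, ← map_sub, hW2] at this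
  filter_upwards [this.eventually (gt_mem_nhds (show (0 : ℝ) < 1 / 2 by norm_num))] with n hn
  rw [norm_sub_rev, ← hp n]
  exact hn

lemma ex_left {A : Type*} [CStarAlgebra A] {P x y : A} (hxP : x * P = x) (hPP : P * P = P)
    (h : ‖P - y * x‖ < 1 / 2) : ∃ L, L * x = P := by
  obtain ⟨u, hu⟩ : IsUnit (1 - (P - y * x)) := isUnit_one_sub_of_norm_lt_one (by linarith)
  refine ⟨↑u⁻¹ * y, ?_⟩
  have : y * x = u * P := by
    rw [hu]; simp [sub_mul, hPP, mul_assoc, hxP]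
  rw [mul_assoc, this]
  simp

/-- Let `W` be any *-homomorphism from `S_η(O_N)` into the bounded
operators on `H̃` sending `(P_{N^n} S_r P_{N^n})_n` to `Σ_{N-1-r}` for each `r ∈ Ω` and whose
kernel is exactly `G_η`. Then a sequence `x ∈ S_η(O_N)` is stable — i.e. its entries
`x n : im P_{N^n} → im P_{N^n}` are eventually invertible (as `N^n × N^n` matrices, with
inverse `B` supported on the range of `P (N^n)` and satisfying `x n * B = B * x n = P (N^n)`)
with uniformly bounded inverses — if and only if the operator `W x` is invertible. -/
theorem stmt17 {H : Type*} [NormedAddCommGroup H] [InnerProductSpace ℂ H] [CompleteSpace H]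
    (e : HilbertBasis ℕ ℂ H) (N : ℕ) (hN : 2 ≤ N)
    (S : Fin N → H →L[ℂ] H)
    (hS : ∀ (i : Fin N) (r : ℕ), S i (e r) = e (r * N + (i : ℕ)))
    (P : ℕ → H →L[ℂ] H)
    (hP : ∀ n k : ℕ, P n (e k) = if k < n then e k else 0)
    {H2 : Type*} [NormedAddCommGroup H2] [InnerProductSpace ℂ H2] [CompleteSpace H2]
    (f : HilbertBasis (ℕ × ℕ) ℂ H2)
    (Sg : Fin N → H2 →L[ℂ] H2)
    (hSg : ∀ (i : Fin N) (m r : ℕ),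
      Sg i (f (m, r)) = if m = 0 then 0 else f (m - 1, r * N + (i : ℕ)))
    (W : Seta S P →⋆ₙₐ[ℂ] (H2 →L[ℂ] H2))
    (hW1 : ∀ (r : Fin N) (x : ↥(Seta S P)),
      (∀ n : ℕ, (x : BoundedContinuousFunction ℕ (H →L[ℂ] H)) n
          = P (N ^ n) * S r * P (N ^ n)) →
      W x = Sg (Fin.rev r))
    (hW2 : ∀ x : ↥(Seta S P),
      W x = 0 ↔ Filter.Tendsto
        (fun n => ‖(x : BoundedContinuousFunction ℕ (H →L[ℂ] H)) n‖)
        Filter.atTop (nhds 0))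
    (x : ↥(Seta S P)) :
    (∃ (n₀ : ℕ) (C : ℝ), ∀ n : ℕ, n₀ ≤ n →
      ∃ B : H →L[ℂ] H, B = P (N ^ n) * B * P (N ^ n) ∧
        (x : BoundedContinuousFunction ℕ (H →L[ℂ] H)) n * B = P (N ^ n) ∧
        B * (x : BoundedContinuousFunction ℕ (H →L[ℂ] H)) n = P (N ^ n) ∧
        ‖B‖ ≤ C) ↔
    IsUnit (W x) := by
  have hsp : ∀ n, IsStarProjection (P n) := P_sp e P hP
  have hsS : ∀ n, star (P n) = P n := fun n => (hsp n).isSelfAdjoint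
  have hPP : ∀ n, P n * P n = P n := fun n => (hsp n).isIdempotentElem.eq
  have hSmem : ∀ r, S r ∈ NonUnitalStarAlgebra.adjoin ℂ (Set.range S) := fun r =>
    NonUnitalStarAlgebra.subset_adjoin ℂ _ ⟨r, rfl⟩
  have h1mem : (1 : H →L[ℂ] H) ∈ NonUnitalStarAlgebra.adjoin ℂ (Set.range S) := by
    rw [← S_sum e N hN S hS]
    exact sum_mem fun i _ => mul_mem (hSmem i) (star_mem (hSmem i))
  have hle := NonUnitalStarSubalgebra.le_topologicalClosure
    (NonUnitalStarAlgebra.adjoin ℂ (Set.range S))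
  let p : Seta S P := ⟨_, compr_mem S P hsp 1 (hle h1mem)⟩
  let s : Fin N → Seta S P := fun r => ⟨_, compr_mem S P hsp (S r) (hle (hSmem r))⟩
  have hp : ∀ n, (p : BoundedContinuousFunction ℕ (H →L[ℂ] H)) n = P (N ^ n) := by
    intro n
    change P (N ^ n) * 1 * P (N ^ n) = _
    rw [mul_one, hPP]
  have hpx : ∀ y : Seta S P, p * y = y := by
    intro y
    apply Subtype.ext
    ext1 n
    change (p : BoundedContinuousFunction ℕ (H →L[ℂ] H)) n *
      (y : BoundedContinuousFunction ℕ (H →L[ℂ] H)) n = _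
    rw [hp, (seta_corner S P hsp y n).1]
  have hWs : ∀ r, W (s r) = Sg (Fin.rev r) := fun r => hW1 r (s r) fun n => rfl
  have hWp : W p = 1 := by
    refine hb_ext f ?_
    rintro ⟨m, k⟩
    have hi : k % N < N := Nat.mod_lt _ (by omega)
    have h1 : f (m, k) = Sg ⟨k % N, hi⟩ (f (m + 1, k / N)) := by
      rw [hSg]; simp [Nat.div_add_mod']
    have h2 : W p * Sg ⟨k % N, hi⟩ = Sg ⟨k % N, hi⟩ := by
      have := hWs (Fin.rev ⟨k % N, hi⟩)
      rw [Fin.rev_rev] at this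
      rw [← this, ← map_mul, hpx]
    rw [h1, ← mul_apply_eq_comp, h2]
    rfl
  constructor
  · intro h
    have h : Stab N P (x : BoundedContinuousFunction ℕ (H →L[ℂ] H)) := h
    obtain ⟨y, hy⟩ := stab_left hsp W hW2 p hp hWp x h
    obtain ⟨z, hz⟩ := stab_left hsp W hW2 p hp hWp (star x) (h.star hsp)
    rw [isUnit_iff_exists_and_exists]
    refine ⟨⟨star (W z), ?_⟩, ⟨_, hy⟩⟩
    have := congrArg star hz
    rwa [map_star, star_mul, star_star, star_one] at this
  · intro h
    obtain ⟨y, hy⟩ := unit_left W hW2 p hp hWp x h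
    obtain ⟨z, hz⟩ := unit_left W hW2 p hp hWp (star x) (by rw [map_star]; exact h.star)
    obtain ⟨n₀, hn₀⟩ := Filter.eventually_atTop.1 (hy.and hz)
    refine ⟨n₀, 2 * ‖(y : BoundedContinuousFunction ℕ (H →L[ℂ] H))‖, fun n hn => ?_⟩
    obtain ⟨h1, h2⟩ := hn₀ n hn
    obtain ⟨hc1, hc2⟩ := seta_corner S P hsp x n
    obtain ⟨-, hc3⟩ := seta_corner S P hsp (star x) n
    obtain ⟨-, hcy⟩ := seta_corner S P hsp y n
    obtain ⟨L, hL⟩ := ex_left hc2 (hPP _) h1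
    obtain ⟨R, hR⟩ := ex_left hc3 (hPP _) h2
    have hR : (x : BoundedContinuousFunction ℕ (H →L[ℂ] H)) n * star R = P (N ^ n) := by
      have := congrArg star hR
      rw [star_mul, hsS] at this
      rw [← this]
      congr 1
      exact (star_star ((x : BoundedContinuousFunction ℕ (H →L[ℂ] H)) n)).symm
    have hny : ‖(y : BoundedContinuousFunction ℕ (H →L[ℂ] H)) n‖ ≤
      ‖(y : BoundedContinuousFunction ℕ (H →L[ℂ] H))‖ :=
      BoundedContinuousFunction.norm_coe_le_norm _ n
    generalize (x : BoundedContinuousFunction ℕ (H →L[ℂ] H)) n = X at *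
    generalize (y : BoundedContinuousFunction ℕ (H →L[ℂ] H)) n = Y at *
    generalize ‖(y : BoundedContinuousFunction ℕ (H →L[ℂ] H))‖ = M at *
    have hq := hPP (N ^ n)
    generalize P (N ^ n) = Q at *
    have hLR : L * Q = Q * star R := by
      rw [← hR, ← mul_assoc, hL, hR]
    have hXB : X * (Q * star R) = Q := by rw [← mul_assoc, hc2, hR]
    refine ⟨Q * star R, ?_, hXB, ?_, ?_⟩
    · rw [← hLR, mul_assoc, mul_assoc, hq, hLR, ← mul_assoc, hq]
    · rw [← hLR, mul_assoc, hc1, hL]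
    · have e1 : Q * star R = Y + (Q - Y * X) * (Q * star R) := by
        rw [sub_mul, mul_assoc Y, hXB, hcy, ← mul_assoc, hq]; abel
      have e2 : ‖Q * star R‖ ≤ ‖Y‖ + ‖Q - Y * X‖ * ‖Q * star R‖ := by
        conv_lhs => rw [e1]
        exact (norm_add_le _ _).trans (by gcongr; exact norm_mul_le _ _)
      nlinarith [norm_nonneg (Q * star R)]
end

section
/- The algebra S_η(O_N) is fractal; concretely: for every sequence (A_n) ∈ S_η(O_N) the limit lim_{n→∞}‖A_n‖ exists, and in particular, if some subsequence (A_{n_k}) satisfies ‖A_{n_k}‖ → 0, then ‖A_n‖ → 0. -/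
set_option synthInstance.maxHeartbeats 1000000
set_option maxHeartbeats 1000000

open Filter Topology

def ff (N K p r : ℕ) : ℕ := r % N ^ p + N ^ (p + K) + N ^ (p + K + 1) * (r / N ^ p)

lemma ff_low {N : ℕ} (hN : 2 ≤ N) (K p r : ℕ) :
    r % N ^ p + N ^ (p + K) < N ^ (p + K + 1) := by
  have h0 : 0 < N ^ p := by positivity
  have h1 : r % N ^ p < N ^ p := Nat.mod_lt _ h0
  have h2 : N ^ p ≤ N ^ (p + K) := Nat.pow_le_pow_right (by omega) (by omega)
  have h3 : N ^ (p + K) * 2 ≤ N ^ (p + K) * N := Nat.mul_le_mul_left _ hN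
  rw [pow_succ]
  omega

lemma ff_div {N : ℕ} (hN : 2 ≤ N) (K p r : ℕ) : ff N K p r / N ^ (p + K + 1) = r / N ^ p := by
  unfold ff
  rw [Nat.add_mul_div_left _ _ (by positivity), Nat.div_eq_of_lt (ff_low hN K p r), zero_add]

lemma ff_mod {N : ℕ} (hN : 2 ≤ N) (K p r : ℕ) :
    ff N K p r % N ^ (p + K + 1) = r % N ^ p + N ^ (p + K) := by
  unfold ff
  rw [Nat.add_mul_mod_self_left, Nat.mod_eq_of_lt (ff_low hN K p r)]

lemma ff_inj {N : ℕ} (hN : 2 ≤ N) (K p : ℕ) : Function.Injective (ff N K p) := by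
  intro r s h
  have h1 := ff_div hN K p r
  have h2 := ff_mod hN K p r
  rw [h, ff_div hN] at h1
  rw [h, ff_mod hN] at h2
  rw [← Nat.mod_add_div r (N ^ p), ← Nat.mod_add_div s (N ^ p), h1]
  omega

lemma ff_ne {N : ℕ} (hN : 2 ≤ N) (K p q r s : ℕ) (h : p < q) (h' : q ≤ p + K) :
    ff N K p r ≠ ff N K q s := by
  intro e
  have h2 := ff_mod hN K p r
  rw [e] at h2
  obtain ⟨t, rfl⟩ : ∃ t, q = p + 1 + t := ⟨q - (p + 1), by omega⟩
  have h3 : ff N K (p + 1 + t) s = s % N ^ (p + 1 + t) + N ^ (p + K + 1) *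
      (N ^ t + N ^ (t + 1) * (s / N ^ (p + 1 + t))) := by
    unfold ff; ring
  have h4 : s % N ^ (p + 1 + t) < N ^ (p + 1 + t) := Nat.mod_lt _ (by positivity)
  have h5 : N ^ (p + 1 + t) ≤ N ^ (p + K) := Nat.pow_le_pow_right (by omega) h'
  have h6 : N ^ (p + K) ≤ N ^ (p + K + 1) := Nat.pow_le_pow_right (by omega) (by omega)
  rw [h3, Nat.add_mul_mod_self_left,
    Nat.mod_eq_of_lt (show s % N ^ (p + 1 + t) < N ^ (p + K + 1) by omega)] at h2
  have h7 : N ^ (p + K) ≤ r % N ^ p + N ^ (p + K) := Nat.le_add_left _ _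
  rw [← h2] at h7
  omega

lemma ff_succ {N : ℕ} (K p r i : ℕ) (hi : i < N) :
    ff N K (p + 1) (r * N + i) = ff N K p r * N + i := by
  have h0 : (r * N + i) % N = i := by
    rw [Nat.mul_add_mod', Nat.mod_eq_of_lt hi]
  have h1 : (r * N + i) / N = r := by
    rw [mul_comm, Nat.mul_add_div (by omega), Nat.div_eq_of_lt hi, add_zero]
  unfold ff
  rw [pow_succ' N p, Nat.mod_mul, h0, ← Nat.div_div_eq_div_mul, h1]
  ring

lemma ff_lt {N : ℕ} (hN : 2 ≤ N) (K p n r : ℕ) (hp : p ≤ n) :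
    ff N K p r < N ^ (n + K + 1) ↔ r < N ^ n := by
  obtain ⟨t, rfl⟩ : ∃ t, n = p + t := ⟨n - p, by omega⟩
  have e1 : N ^ (p + t + K + 1) = N ^ t * N ^ (p + K + 1) := by ring
  have e2 : N ^ (p + t) = N ^ t * N ^ p := by ring
  rw [e1, e2, ← Nat.div_lt_iff_lt_mul (by positivity), ff_div hN,
    Nat.div_lt_iff_lt_mul (by positivity)]

section
variable {H : Type*} [NormedAddCommGroup H] [InnerProductSpace ℂ H] [CompleteSpace H]

lemma hb_dense (e : HilbertBasis ℕ ℂ H) :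
    Dense (Submodule.span ℂ (Set.range e) : Set H) := by
  rw [Submodule.dense_iff_topologicalClosure_eq_top]; exact e.dense_span

lemma hb_ext_s18 (e : HilbertBasis ℕ ℂ H) {A B : H →L[ℂ] H} (h : ∀ k, A (e k) = B (e k)) : A = B := by
  apply ContinuousLinearMap.ext_on (hb_dense e)
  rintro _ ⟨k, rfl⟩
  exact h k

lemma hb_vec_ext (e : HilbertBasis ℕ ℂ H) {x y : H}
    (h : ∀ k, inner ℂ (e k) x = inner ℂ (e k) y) : x = y := by
  apply e.repr.injective
  ext k
  rw [e.repr_apply_apply, e.repr_apply_apply, h]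

lemma hb_inner (e : HilbertBasis ℕ ℂ H) (j k : ℕ) :
    inner ℂ (e j) (e k) = if j = k then (1 : ℂ) else 0 :=
  orthonormal_iff_ite.mp e.orthonormal j k

noncomputable def VV (e : HilbertBasis ℕ ℂ H) (f : ℕ → ℕ) (hf : Function.Injective f) : H →ₗᵢ[ℂ] H :=
  ((e.orthonormal.comp f hf).orthogonalFamily.linearIsometry).comp e.repr.toLinearIsometry

lemma VV_apply (e : HilbertBasis ℕ ℂ H) (f : ℕ → ℕ) (hf : Function.Injective f) (k : ℕ) :
    VV e f hf (e k) = e (f k) := by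
  simp [VV, e.repr_self, OrthogonalFamily.linearIsometry_apply_single]

lemma VV_orth (e : HilbertBasis ℕ ℂ H) (f g : ℕ → ℕ) (hf : Function.Injective f)
    (hg : Function.Injective g) (h : ∀ r s, f r ≠ g s) (x y : H) :
    inner ℂ (VV e f hf x) (VV e g hg y) = 0 := by
  have : star (VV e f hf).toContinuousLinearMap * (VV e g hg).toContinuousLinearMap = 0 := by
    apply hb_ext_s18 e
    intro k
    apply hb_vec_ext e
    intro j
    simp [ContinuousLinearMap.star_eq_adjoint, ContinuousLinearMap.adjoint_inner_right, VV_apply,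
      hb_inner, h]
  have h2 := congrArg (fun T : H →L[ℂ] H => inner ℂ x (T y)) this
  simpa [ContinuousLinearMap.star_eq_adjoint, ContinuousLinearMap.adjoint_inner_right] using h2

/-- insertion isometries -/
noncomputable def UU (e : HilbertBasis ℕ ℂ H) {N : ℕ} (hN : 2 ≤ N) (K p : ℕ) : H →ₗᵢ[ℂ] H :=
  VV e (ff N K p) (ff_inj hN K p)

noncomputable def UC (e : HilbertBasis ℕ ℂ H) {N : ℕ} (hN : 2 ≤ N) (K p : ℕ) : H →L[ℂ] H :=
  (UU e hN K p).toContinuousLinearMap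

lemma UC_apply (e : HilbertBasis ℕ ℂ H) {N : ℕ} (hN : 2 ≤ N) (K p k : ℕ) :
    UC e hN K p (e k) = e (ff N K p k) := by
  simp [UC, UU, VV_apply]

lemma UC_norm (e : HilbertBasis ℕ ℂ H) {N : ℕ} (hN : 2 ≤ N) (K p : ℕ) : ‖UC e hN K p‖ ≤ 1 :=
  LinearIsometry.norm_toContinuousLinearMap_le _

noncomputable def EE (e : HilbertBasis ℕ ℂ H) {N : ℕ} (hN : 2 ≤ N) (n K : ℕ) : H →L[ℂ] H :=
  ∑ p ∈ Finset.range n, UC e hN K p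

lemma EE_norm (e : HilbertBasis ℕ ℂ H) {N : ℕ} (hN : 2 ≤ N) (n K : ℕ) (h : n ≤ K) (x : H) :
    ‖EE e hN n K x‖ = √n * ‖x‖ := by
  have ho : OrthogonalFamily ℂ (fun _ : Fin n => H) (fun p => UU e hN K p) := by
    intro p q hpq x y
    apply VV_orth
    intro r s
    rcases lt_or_gt_of_ne (Fin.val_ne_of_ne hpq) with h1 | h1
    · exact ff_ne hN K p q r s h1 (by omega)
    · exact (ff_ne hN K q p s r h1 (by omega)).symm
  have h1 := ho.norm_sum (fun _ => x) Finset.univ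
  have h2 : EE e hN n K x = ∑ p : Fin n, UU e hN K p x := by
    simp [EE, UC, Finset.sum_range]
  rw [← h2] at h1
  simp only [Finset.sum_const, Finset.card_univ, Fintype.card_fin, nsmul_eq_mul] at h1
  rw [← Real.sqrt_sq (norm_nonneg (EE e hN n K x)), h1, Real.sqrt_mul (by positivity),
    Real.sqrt_sq (norm_nonneg x)]

noncomputable def WW (e : HilbertBasis ℕ ℂ H) {N : ℕ} (hN : 2 ≤ N) (q : ℕ × ℕ) : H →L[ℂ] H :=
  (((√(q.1 : ℝ))⁻¹ : ℝ) : ℂ) • EE e hN q.1 q.2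

lemma WW_norm_apply (e : HilbertBasis ℕ ℂ H) {N : ℕ} (hN : 2 ≤ N) (q : ℕ × ℕ) (h : q.1 ≤ q.2)
    (h0 : 0 < q.1) (x : H) : ‖WW e hN q x‖ = ‖x‖ := by
  have : 0 < √(q.1 : ℝ) := Real.sqrt_pos.mpr (by exact_mod_cast h0)
  rw [WW, smul_apply, norm_smul, EE_norm e hN _ _ h, Complex.norm_real,
    Real.norm_of_nonneg (by positivity)]
  field_simp

/-- the index filter -/
def FF : Filter (ℕ × ℕ) := comap Prod.fst atTop ⊓ 𝓟 {q | q.1 ≤ q.2}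

lemma FF_iff {p : ℕ × ℕ → Prop} :
    (∀ᶠ q in FF, p q) ↔ ∃ n0, ∀ n K, n0 ≤ n → n ≤ K → p (n, K) := by
  rw [FF, eventually_inf_principal, eventually_comap, eventually_atTop]
  constructor
  · rintro ⟨a, h⟩
    exact ⟨a, fun n K h1 h2 => h n h1 (n, K) rfl h2⟩
  · rintro ⟨a, h⟩
    refine ⟨a, ?_⟩
    rintro n hn ⟨n', K⟩ rfl h2
    exact h n' K hn h2

noncomputable def DD (e : HilbertBasis ℕ ℂ H) {N : ℕ} (hN : 2 ≤ N) (x : ℕ → H →L[ℂ] H) (q : ℕ × ℕ) :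
    H →L[ℂ] H := x (q.1 + q.2 + 1) * WW e hN q - WW e hN q * x q.1

def Asy1 (e : HilbertBasis ℕ ℂ H) {N : ℕ} (hN : 2 ≤ N) (x : ℕ → H →L[ℂ] H) : Prop :=
  Tendsto (DD e hN x) FF (𝓝 0)

def Asy (e : HilbertBasis ℕ ℂ H) {N : ℕ} (hN : 2 ≤ N) (x : ℕ → H →L[ℂ] H) : Prop :=
  (∃ B, ∀ n, ‖x n‖ ≤ B) ∧ Asy1 e hN x ∧ Asy1 e hN (fun n => star (x n))

variable {e : HilbertBasis ℕ ℂ H} {N : ℕ} {hN : 2 ≤ N}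

lemma Asy1.add {x y : ℕ → H →L[ℂ] H} (hx : Asy1 e hN x) (hy : Asy1 e hN y) :
    Asy1 e hN (fun n => x n + y n) := by
  have := Tendsto.add hx hy
  rw [add_zero] at this
  refine this.congr fun q => ?_
  simp only [DD]; noncomm_ring

lemma Asy1.smul {x : ℕ → H →L[ℂ] H} (c : ℂ) (hx : Asy1 e hN x) :
    Asy1 e hN (fun n => c • x n) := by
  have := Tendsto.const_smul hx c
  rw [smul_zero] at this
  refine this.congr fun q => ?_
  simp only [DD, smul_sub, smul_mul_assoc, mul_smul_comm]

lemma Asy1.mul {x y : ℕ → H →L[ℂ] H} {B C : ℝ} (hB : ∀ n, ‖x n‖ ≤ B) (hC : ∀ n, ‖y n‖ ≤ C)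
    (hx : Asy1 e hN x) (hy : Asy1 e hN y) :
    Asy1 e hN (fun n => x n * y n) := by
  have h1 : Tendsto (fun q => B * ‖DD e hN y q‖ + ‖DD e hN x q‖ * C) FF (𝓝 0) := by
    have := ((tendsto_zero_iff_norm_tendsto_zero.mp hy).const_mul B).add
      ((tendsto_zero_iff_norm_tendsto_zero.mp hx).mul_const C)
    simpa using this
  refine squeeze_zero_norm (fun q => ?_) h1
  have : DD e hN (fun n => x n * y n) q =
      x (q.1 + q.2 + 1) * DD e hN y q + DD e hN x q * y q.1 := by
    simp only [DD]; noncomm_ring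
  rw [this]
  refine (norm_add_le _ _).trans (add_le_add ?_ ?_)
  · exact (norm_mul_le _ _).trans (mul_le_mul_of_nonneg_right (hB _) (norm_nonneg _))
  · exact (norm_mul_le _ _).trans (mul_le_mul_of_nonneg_left (hC _) (norm_nonneg _))

lemma Asy.add {x y : ℕ → H →L[ℂ] H} (hx : Asy e hN x) (hy : Asy e hN y) :
    Asy e hN (fun n => x n + y n) := by
  obtain ⟨⟨B, hB⟩, h1, h2⟩ := hx
  obtain ⟨⟨C, hC⟩, h3, h4⟩ := hy
  refine ⟨⟨B + C, fun n => (norm_add_le _ _).trans (add_le_add (hB n) (hC n))⟩, h1.add h3, ?_⟩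
  simpa only [star_add] using h2.add h4

lemma Asy.smul {x : ℕ → H →L[ℂ] H} (c : ℂ) (hx : Asy e hN x) :
    Asy e hN (fun n => c • x n) := by
  obtain ⟨⟨B, hB⟩, h1, h2⟩ := hx
  refine ⟨⟨‖c‖ * B, fun n => ?_⟩, h1.smul c, ?_⟩
  · rw [norm_smul]; exact mul_le_mul_of_nonneg_left (hB n) (norm_nonneg _)
  · simpa only [star_smul] using h2.smul (star c)

lemma Asy.star {x : ℕ → H →L[ℂ] H} (hx : Asy e hN x) :
    Asy e hN (fun n => star (x n)) := by
  obtain ⟨⟨B, hB⟩, h1, h2⟩ := hx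
  refine ⟨⟨B, fun n => ?_⟩, h2, ?_⟩
  · rw [norm_star]; exact hB n
  · simpa only [star_star] using h1

lemma Asy.mul {x y : ℕ → H →L[ℂ] H} (hx : Asy e hN x) (hy : Asy e hN y) :
    Asy e hN (fun n => x n * y n) := by
  have hx' := hx.star
  have hy' := hy.star
  obtain ⟨⟨B, hB⟩, h1, h2⟩ := hx
  obtain ⟨⟨C, hC⟩, h3, h4⟩ := hy
  obtain ⟨⟨B', hB'⟩, -, -⟩ := hx'
  obtain ⟨⟨C', hC'⟩, -, -⟩ := hy'
  refine ⟨⟨B * C, fun n => (norm_mul_le _ _).trans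
    (mul_le_mul (hB n) (hC n) (norm_nonneg _) ((norm_nonneg _).trans (hB n)))⟩,
    Asy1.mul hB hC h1 h3, ?_⟩
  simpa only [star_mul] using Asy1.mul hC' hB' h4 h2

lemma Asy.zero : Asy e hN (fun _ => 0) := by
  have : Asy1 e hN (fun _ => 0) := by
    refine tendsto_const_nhds.congr fun q => ?_
    simp [DD]
  exact ⟨⟨0, by simp⟩, this, by simpa using this⟩

lemma WW_norm {q : ℕ × ℕ} (h : q.1 ≤ q.2) (h0 : 0 < q.1) : ‖WW e hN q‖ ≤ 1 :=
  ContinuousLinearMap.opNorm_le_bound _ zero_le_one fun x => by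
    rw [WW_norm_apply e hN q h h0, one_mul]

lemma Asy1.closed {x : ℕ → H →L[ℂ] H}
    (h : ∀ ε > 0, ∃ y, Asy1 e hN y ∧ ∀ n, ‖x n - y n‖ ≤ ε) : Asy1 e hN x := by
  rw [Asy1, tendsto_zero_iff_norm_tendsto_zero, Metric.tendsto_nhds]
  intro ε hε
  obtain ⟨y, hy, hxy⟩ := h (ε / 4) (by positivity)
  rw [Asy1, tendsto_zero_iff_norm_tendsto_zero, Metric.tendsto_nhds] at hy
  have hy' := hy (ε / 4) (by positivity)
  rw [FF_iff] at hy' ⊢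
  obtain ⟨n0, hn0⟩ := hy'
  refine ⟨n0 + 1, fun n K h1 h2 => ?_⟩
  have h3 := hn0 n K (by omega) h2
  simp only [dist_zero_right, norm_norm] at h3 ⊢
  have hW : ‖WW e hN (n, K)‖ ≤ 1 := WW_norm h2 (by simp; omega)
  have : DD e hN x (n, K) = DD e hN y (n, K) + (x (n + K + 1) - y (n + K + 1)) * WW e hN (n, K)
      - WW e hN (n, K) * (x n - y n) := by
    simp only [DD]; noncomm_ring
  rw [this]
  have a1 : ‖(x (n + K + 1) - y (n + K + 1)) * WW e hN (n, K)‖ ≤ ε / 4 * 1 :=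
    (norm_mul_le _ _).trans (mul_le_mul (hxy _) hW (norm_nonneg _) (by positivity))
  have a2 : ‖WW e hN (n, K) * (x n - y n)‖ ≤ 1 * (ε / 4) :=
    (norm_mul_le _ _).trans (mul_le_mul hW (hxy _) (norm_nonneg _) (by positivity))
  have a3 := norm_sub_le (DD e hN y (n, K) + (x (n + K + 1) - y (n + K + 1)) * WW e hN (n, K))
      (WW e hN (n, K) * (x n - y n))
  have a4 := norm_add_le (DD e hN y (n, K)) ((x (n + K + 1) - y (n + K + 1)) * WW e hN (n, K))
  linarith

lemma Asy.closed {x : ℕ → H →L[ℂ] H}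
    (h : ∀ ε > 0, ∃ y, Asy e hN y ∧ ∀ n, ‖x n - y n‖ ≤ ε) : Asy e hN x := by
  refine ⟨?_, Asy1.closed fun ε hε => ?_, Asy1.closed fun ε hε => ?_⟩
  · obtain ⟨y, ⟨⟨B, hB⟩, -⟩, hy⟩ := h 1 one_pos
    refine ⟨1 + B, fun n => ?_⟩
    have := norm_add_le (x n - y n) (y n)
    rw [sub_add_cancel] at this
    linarith [hB n, hy n]
  · obtain ⟨y, hy, hxy⟩ := h ε hε
    exact ⟨y, hy.2.1, hxy⟩
  · obtain ⟨y, hy, hxy⟩ := h ε hε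
    refine ⟨_, hy.2.2, fun n => ?_⟩
    rw [← star_sub, norm_star]; exact hxy n

/-- bounded commutation with the unnormalised insertions suffices -/
lemma Asy1.of_bound {x : ℕ → H →L[ℂ] H} (C : ℝ)
    (h : ∀ n K, ‖x (n + K + 1) * EE e hN n K - EE e hN n K * x n‖ ≤ C) : Asy1 e hN x := by
  have h1 : Tendsto (fun n : ℕ => (√(n : ℝ))⁻¹ * C) atTop (𝓝 0) := by
    have : Tendsto (fun n : ℕ => √(n : ℝ)) atTop atTop :=
      Real.tendsto_sqrt_atTop.comp tendsto_natCast_atTop_atTop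
    simpa using this.inv_tendsto_atTop.mul_const C
  have h2 : Tendsto (fun q : ℕ × ℕ => (√(q.1 : ℝ))⁻¹ * C) FF (𝓝 0) :=
    h1.comp (tendsto_comap.mono_left inf_le_left)
  refine squeeze_zero_norm (fun q => ?_) h2
  have : DD e hN x q = (((√(q.1 : ℝ))⁻¹ : ℝ) : ℂ) •
      (x (q.1 + q.2 + 1) * EE e hN q.1 q.2 - EE e hN q.1 q.2 * x q.1) := by
    simp only [DD, WW, smul_sub, smul_mul_assoc, mul_smul_comm]
  rw [this, norm_smul, Complex.norm_real, Real.norm_of_nonneg (by positivity)]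
  exact mul_le_mul_of_nonneg_left (h _ _) (by positivity)

lemma S_comm {S : Fin N → H →L[ℂ] H}
    (hS : ∀ (i : Fin N) (r : ℕ), S i (e r) = e (r * N + (i : ℕ))) (i : Fin N) (K p : ℕ) :
    S i * UC e hN K p = UC e hN K (p + 1) * S i := by
  apply hb_ext_s18 e
  intro k
  simp [UC_apply, hS, ff_succ K p k i i.2]

lemma S_star_apply {S : Fin N → H →L[ℂ] H}
    (hS : ∀ (i : Fin N) (r : ℕ), S i (e r) = e (r * N + (i : ℕ))) (i : Fin N) (r j : ℕ)
    (hj : j < N) :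
    star (S i) (e (r * N + j)) = if (i : ℕ) = j then e r else 0 := by
  apply hb_vec_ext e
  intro k
  rw [ContinuousLinearMap.star_eq_adjoint, ContinuousLinearMap.adjoint_inner_right, hS, hb_inner]
  have hi := i.2
  have key : k * N + (i : ℕ) = r * N + j ↔ (i : ℕ) = j ∧ k = r := by
    constructor
    · intro h
      have h1 := congrArg (· % N) h
      simp only [Nat.mul_add_mod', Nat.mod_eq_of_lt hi, Nat.mod_eq_of_lt hj] at h1
      refine ⟨h1, ?_⟩
      rw [h1] at h
      exact Nat.eq_of_mul_eq_mul_right (by omega) (Nat.add_right_cancel h)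
    · rintro ⟨h1, h2⟩
      rw [h1, h2]
  by_cases h1 : (i : ℕ) = j
  · simp only [key]
    simp [h1, hb_inner]
  · simp [key, h1]

lemma S_star_comm {S : Fin N → H →L[ℂ] H}
    (hS : ∀ (i : Fin N) (r : ℕ), S i (e r) = e (r * N + (i : ℕ))) (i : Fin N) (K p : ℕ) :
    star (S i) * UC e hN K (p + 1) = UC e hN K p * star (S i) := by
  apply hb_ext_s18 e
  intro k
  have hk : k / N * N + k % N = k := by rw [mul_comm]; exact Nat.div_add_mod k N
  have hm : k % N < N := Nat.mod_lt _ (by omega)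
  rw [← hk]
  simp only [mul_apply_eq_comp, UC_apply, ff_succ K p _ _ hm, S_star_apply hS _ _ _ hm]
  split_ifs <;> simp [UC_apply]

lemma S_asy {S : Fin N → H →L[ℂ] H}
    (hS : ∀ (i : Fin N) (r : ℕ), S i (e r) = e (r * N + (i : ℕ))) (i : Fin N) :
    Asy e hN (fun _ => S i) := by
  have hb : ∀ K n, ‖UC e hN K n - UC e hN K 0‖ ≤ 2 := fun K n => by
    have := norm_sub_le (UC e hN K n) (UC e hN K 0)
    linarith [UC_norm e hN K n, UC_norm e hN K 0]
  refine ⟨⟨‖S i‖, fun _ => le_rfl⟩, Asy1.of_bound (2 * ‖S i‖) fun n K => ?_,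
    Asy1.of_bound (‖star (S i)‖ * 2) fun n K => ?_⟩
  · have : S i * EE e hN n K - EE e hN n K * S i = (UC e hN K n - UC e hN K 0) * S i := by
      rw [EE, Finset.mul_sum, ← Finset.sum_range_sub, Finset.sum_mul, Finset.sum_mul,
        ← Finset.sum_sub_distrib]
      exact Finset.sum_congr rfl fun p _ => by rw [S_comm hS, sub_mul]
    rw [this]
    exact (norm_mul_le _ _).trans (mul_le_mul_of_nonneg_right (hb _ _) (norm_nonneg _))
  · have : star (S i) * EE e hN n K - EE e hN n K * star (S i) =
        - (star (S i) * (UC e hN K n - UC e hN K 0)) := by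
      rw [EE, Finset.mul_sum, ← Finset.sum_range_sub, Finset.sum_mul, Finset.mul_sum,
        ← Finset.sum_sub_distrib, ← Finset.sum_neg_distrib]
      exact Finset.sum_congr rfl fun p _ => by rw [← S_star_comm hS, mul_sub]; abel
    rw [this, norm_neg]
    exact (norm_mul_le _ _).trans (mul_le_mul_of_nonneg_left (hb _ _) (norm_nonneg _))

lemma P_star {P : ℕ → H →L[ℂ] H}
    (hP : ∀ n k : ℕ, P n (e k) = if k < n then e k else 0) (n : ℕ) : star (P n) = P n := by
  apply hb_ext_s18 e
  intro k
  apply hb_vec_ext e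
  intro j
  rw [ContinuousLinearMap.star_eq_adjoint, ContinuousLinearMap.adjoint_inner_right, hP, hP]
  by_cases h : j = k
  · subst h; split_ifs <;> simp
  · split_ifs <;> simp [hb_inner, h]

lemma P_norm {P : ℕ → H →L[ℂ] H}
    (hP : ∀ n k : ℕ, P n (e k) = if k < n then e k else 0) (n : ℕ) : ‖P n‖ ≤ 1 := by
  have h1 : star (P n) * P n = P n := by
    rw [P_star hP]
    apply hb_ext_s18 e
    intro k
    rw [mul_apply_eq_comp, hP]
    split_ifs with h
    · rw [hP, if_pos h]
    · simp
  have h2 := CStarRing.norm_star_mul_self (x := P n)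
  rw [h1] at h2
  nlinarith [norm_nonneg (P n)]

lemma P_asy {P : ℕ → H →L[ℂ] H}
    (hP : ∀ n k : ℕ, P n (e k) = if k < n then e k else 0) :
    Asy e hN (fun n => P (N ^ n)) := by
  have h1 : Asy1 e hN (fun n => P (N ^ n)) := by
    refine Asy1.of_bound 0 fun n K => ?_
    rw [EE, Finset.mul_sum, Finset.sum_mul, ← Finset.sum_sub_distrib, Finset.sum_eq_zero, norm_zero]
    intro p hp
    rw [sub_eq_zero]
    apply hb_ext_s18 e
    intro k
    rw [mul_apply_eq_comp, mul_apply_eq_comp, UC_apply, hP, hP]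
    simp only [ff_lt hN K p n k (Finset.mem_range.mp hp).le]
    split_ifs <;> simp [UC_apply]
  exact ⟨⟨1, fun n => P_norm hP _⟩, h1, by simpa only [P_star hP] using h1⟩

lemma const_asy {S : Fin N → H →L[ℂ] H}
    (hS : ∀ (i : Fin N) (r : ℕ), S i (e r) = e (r * N + (i : ℕ))) {A : H →L[ℂ] H}
    (hA : A ∈ (NonUnitalStarAlgebra.adjoin ℂ (Set.range S)).topologicalClosure) :
    Asy e hN (fun _ => A) := by
  have h0 : ∀ B ∈ NonUnitalStarAlgebra.adjoin ℂ (Set.range S), Asy e hN (fun _ => B) := by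
    intro B hB
    induction hB using NonUnitalStarAlgebra.adjoin_induction with
    | mem x hx => obtain ⟨i, rfl⟩ := hx; exact S_asy hS i
    | add x y _ _ hx hy => exact hx.add hy
    | zero => exact Asy.zero
    | mul x y _ _ hx hy => exact hx.mul hy
    | smul r x _ hx => exact hx.smul r
    | star x _ hx => exact hx.star
  have hA' : A ∈ closure (NonUnitalStarAlgebra.adjoin ℂ (Set.range S) : Set (H →L[ℂ] H)) := hA
  rw [Metric.mem_closure_iff] at hA'
  refine Asy.closed fun ε hε => ?_
  obtain ⟨B, hB, hd⟩ := hA' ε hε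
  exact ⟨_, h0 B hB, fun _ => by rw [← dist_eq_norm]; exact hd.le⟩

lemma Seta_asy {S : Fin N → H →L[ℂ] H}
    (hS : ∀ (i : Fin N) (r : ℕ), S i (e r) = e (r * N + (i : ℕ)))
    {P : ℕ → H →L[ℂ] H} (hP : ∀ n k : ℕ, P n (e k) = if k < n then e k else 0)
    {x : BoundedContinuousFunction ℕ (H →L[ℂ] H)} (hx : x ∈ Seta S P) :
    Asy e hN (fun n => x n) := by
  have hx' : x ∈ closure (NonUnitalStarAlgebra.adjoin ℂ
    {g : BoundedContinuousFunction ℕ (H →L[ℂ] H) |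
      ∃ A ∈ (NonUnitalStarAlgebra.adjoin ℂ (Set.range S)).topologicalClosure,
        ∀ n : ℕ, g n = P (N ^ n) * A * P (N ^ n)} :
      Set (BoundedContinuousFunction ℕ (H →L[ℂ] H))) := hx
  rw [Metric.mem_closure_iff] at hx'
  refine Asy.closed fun ε hε => ?_
  obtain ⟨y, hy, hd⟩ := hx' ε hε
  refine ⟨fun n => y n, ?_, fun n => ?_⟩
  · clear hd
    have hy' : y ∈ NonUnitalStarAlgebra.adjoin ℂ
      {g : BoundedContinuousFunction ℕ (H →L[ℂ] H) |
      ∃ A ∈ (NonUnitalStarAlgebra.adjoin ℂ (Set.range S)).topologicalClosure,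
        ∀ n : ℕ, g n = P (N ^ n) * A * P (N ^ n)} := hy
    clear hy
    induction hy' using NonUnitalStarAlgebra.adjoin_induction with
    | mem x hx =>
      obtain ⟨A, hA, h⟩ := hx
      simp only [h]
      exact ((P_asy hP).mul (const_asy hS hA)).mul (P_asy hP)
    | add x y _ _ hx hy => exact hx.add hy
    | zero => exact Asy.zero
    | mul x y _ _ hx hy => exact hx.mul hy
    | smul r x _ hx => exact hx.smul r
    | star x _ hx => exact hx.star
  · rw [← dist_eq_norm]
    exact (BoundedContinuousFunction.dist_coe_le_dist n).trans hd.le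

lemma Asy.mono {x : ℕ → H →L[ℂ] H} (hx : Asy e hN x) {ε : ℝ} (hε : 0 < ε) :
    ∃ n0, ∀ n K, n0 ≤ n → n ≤ K → ‖x n‖ ≤ ‖x (n + K + 1)‖ + ε := by
  have h := hx.2.1
  rw [Asy1, tendsto_zero_iff_norm_tendsto_zero, Metric.tendsto_nhds] at h
  have h' := h ε hε
  rw [FF_iff] at h'
  obtain ⟨n0, hn0⟩ := h'
  refine ⟨n0 + 1, fun n K h1 h2 => ?_⟩
  have h3 := hn0 n K (by omega) h2
  simp only [dist_zero_right, norm_norm] at h3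
  have hW : ‖WW e hN (n, K)‖ ≤ 1 := WW_norm h2 (by simp; omega)
  have h4 : ‖x n‖ = ‖WW e hN (n, K) * x n‖ := by
    apply le_antisymm
    · refine ContinuousLinearMap.opNorm_le_bound _ (norm_nonneg _) fun v => ?_
      rw [← WW_norm_apply e hN (n, K) h2 (by simp; omega) (x n v)]
      exact (WW e hN (n, K) * x n).le_opNorm v
    · exact (norm_mul_le _ _).trans (mul_le_of_le_one_left (norm_nonneg _) hW)
  have h5 : WW e hN (n, K) * x n = x (n + K + 1) * WW e hN (n, K) - DD e hN x (n, K) := by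
    simp [DD]
  rw [h4, h5]
  refine (norm_sub_le _ _).trans (add_le_add ?_ h3.le)
  exact (norm_mul_le _ _).trans (mul_le_of_le_one_right (norm_nonneg _) hW)

lemma Asy.lim {x : ℕ → H →L[ℂ] H} (hx : Asy e hN x) :
    ∃ L, Tendsto (fun n => ‖x n‖) atTop (𝓝 L) := by
  obtain ⟨B, hB⟩ := hx.1
  refine tendsto_of_no_upcrossings dense_univ ?_
    (isBoundedUnder_of ⟨B, hB⟩) (isBoundedUnder_of ⟨0, fun n => norm_nonneg _⟩)
  rintro a - b - hab ⟨h1, h2⟩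
  obtain ⟨n0, h0⟩ := hx.mono (sub_pos.mpr hab)
  obtain ⟨n, hn, hbn⟩ := frequently_atTop.mp h2 n0
  obtain ⟨m, hm, ham⟩ := frequently_atTop.mp h1 (n + n + 1)
  have := h0 n (m - n - 1) hn (by omega)
  rw [show n + (m - n - 1) + 1 = m by omega] at this
  linarith

end

/-- The algebra `S_η(O_N)` is fractal; concretely, for every sequence
`x ∈ S_η(O_N)` the limit `lim_n ‖x n‖` exists, and in particular if `‖x (φ m)‖ → 0` along
some strictly monotone subsequence `φ`, then `‖x n‖ → 0`. -/
theorem stmt18 {H : Type*} [NormedAddCommGroup H] [InnerProductSpace ℂ H] [CompleteSpace H]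
    (e : HilbertBasis ℕ ℂ H) (N : ℕ) (hN : 2 ≤ N)
    (S : Fin N → H →L[ℂ] H)
    (hS : ∀ (i : Fin N) (r : ℕ), S i (e r) = e (r * N + (i : ℕ)))
    (P : ℕ → H →L[ℂ] H)
    (hP : ∀ n k : ℕ, P n (e k) = if k < n then e k else 0)
    (x : ↥(Seta S P)) :
    (∃ L : ℝ, Filter.Tendsto
        (fun n => ‖(x : BoundedContinuousFunction ℕ (H →L[ℂ] H)) n‖)
        Filter.atTop (nhds L)) ∧
    (∀ φ : ℕ → ℕ, StrictMono φ →
      Filter.Tendsto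
        (fun m => ‖(x : BoundedContinuousFunction ℕ (H →L[ℂ] H)) (φ m)‖)
        Filter.atTop (nhds 0) →
      Filter.Tendsto
        (fun n => ‖(x : BoundedContinuousFunction ℕ (H →L[ℂ] H)) n‖)
        Filter.atTop (nhds 0)) := by
  obtain ⟨L, hL⟩ := (Seta_asy (hN := hN) hS hP x.2).lim
  refine ⟨⟨L, hL⟩, fun φ hφ h => ?_⟩
  have : L = 0 := tendsto_nhds_unique (hL.comp hφ.tendsto_atTop) h
  rw [this] at hL
  exact hL
end
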